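/- arXiv:1503.08082 — 2 statements merged into one kernel-verified Lean document; each statement's English description precedes it below -/
import Mathlib

section
/- Fix t > 0, ξ > 0, y₀ > 0, p < 1 and k > 0. Set β_p := 1/(3-2p), ȳ_p := (k²ξ²t(1-p)/2)^{β_p}, f₀(y) := k²/(2y) + y^{2(1-p)}/(2ξ²t(1-p)²) and f₁(y) := (y·y₀)^{1-p}/(ξ²t(1-p)²). Then as τ → 0⁺: C(k,τ) = exp( -f₀(ȳ_p)·τ^{β_p - 1} + f₁(ȳ_p)·τ^{(β_p - 1)/2} ) · c₅ · τ^{(6-5p)/(6-4p)} · (1 + O(τ^{(1-β_p)/2})), where c₅ := y₀^{p/2}·ȳ_p^{3(1-p)/2}·exp( k/2 - y₀^{2(1-p)}/(2ξ²t(1-p)²) + f₁'(ȳ_p)²/(2·f₀''(ȳ_p)) ) / ( k²·ξ·√(2π·f₀''(ȳ_p)·t) ), and f₁', f₀'' denote the first derivative of f₁ and second derivative of f₀. -/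
/-- The standard normal cumulative distribution function. -/
noncomputable def Phi (x : ℝ) : ℝ :=
  ∫ s in Set.Iic x, Real.exp (-(s ^ 2) / 2) / Real.sqrt (2 * Real.pi)

/-- The Black–Scholes call price. -/
noncomputable def BS (k w T : ℝ) : ℝ :=
  Phi (-k / Real.sqrt (w * T) + Real.sqrt (w * T) / 2)
    - Real.exp k * Phi (-k / Real.sqrt (w * T) - Real.sqrt (w * T) / 2)

/-- The modified Bessel function of the first kind of order `ν`. -/
noncomputable def besselI (ν x : ℝ) : ℝ :=
  ∑' m : ℕ, (x / 2) ^ (2 * (m : ℝ) + ν) / ((m.factorial : ℝ) * Real.Gamma ((m : ℝ) + ν + 1))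

/-!
As `τ → 0` the call price `BS k y τ` is a constant times
`(y * τ) ^ (3 / 2) * exp (-k ^ 2 / (2 * y * τ))` up to a relative error `O(y * τ)`, and the Bessel
function in the density at `x = f₁ y` is `exp x / √(2 * π * x)` up to a relative error `O(1 / x)`.
Put `δ = τ ^ ((1 - β_p) / 2)` and `y = ȳ_p * τ ^ (-β_p) * exp w`. Since
`τ ^ (1 - β_p) = δ ^ 2` and `(τ ^ (-β_p)) ^ (1 - p) = 1 / δ`, the exponent becomes
`-f₀ (ȳ_p * exp w) / δ ^ 2 + f₁ (ȳ_p * exp w) / δ`, and both relative errors become `O(δ)`.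
As `ȳ_p` minimizes `f₀`, blowing up by `w = δ * v` and applying Laplace's method leaves a Gaussian
integral in `v`. The first-order variation of `f₁` survives in it as a shift of the Gaussian and
contributes the factor `exp (f₁' ^ 2 / (2 * f₀''))`.
-/

open Real Set Filter Topology MeasureTheory Asymptotics

section NormalCDF

lemma integrable_normal_density : Integrable fun s : ℝ => exp (-(s ^ 2) / 2) / √(2 * π) := by
  simpa only [neg_div, neg_mul, one_div, inv_mul_eq_div] using
    (integrable_exp_neg_mul_sq (b := 1 / 2) (by norm_num)).div_const √(2 * π)

lemma Phi_eq_add_intervalIntegral (x : ℝ) :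
    Phi x = Phi 0 + ∫ s in (0 : ℝ)..x, exp (-(s ^ 2) / 2) / √(2 * π) := by
  rw [Phi, Phi, ← intervalIntegral.integral_Iic_sub_Iic integrable_normal_density.integrableOn
    integrable_normal_density.integrableOn, add_sub_cancel]

lemma hasDerivAt_Phi (x : ℝ) : HasDerivAt Phi (exp (-(x ^ 2) / 2) / √(2 * π)) x := by
  have hcont : Continuous fun s : ℝ => exp (-(s ^ 2) / 2) / √(2 * π) := by fun_prop
  rw [funext Phi_eq_add_intervalIntegral]
  exact (hcont.integral_hasStrictDerivAt 0 x).hasDerivAt.const_add _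

lemma continuous_Phi : Continuous Phi :=
  continuous_iff_continuousAt.2 fun x => (hasDerivAt_Phi x).continuousAt

lemma tendsto_Phi_atBot : Tendsto Phi atBot (𝓝 0) :=
  tendsto_integral_Iic_zero tendsto_id

end NormalCDF

lemma nonneg_of_deriv_nonneg_of_tendsto_zero {f f' : ℝ → ℝ} {a s : ℝ}
    (hf : ∀ x, a < x → HasDerivAt f (f' x) x) (hf' : ∀ x, a < x → 0 ≤ f' x)
    (hlim : Tendsto f (𝓝[>] a) (𝓝 0)) (hs : a < s) : 0 ≤ f s := by
  have hmono : MonotoneOn f (Ioi a) :=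
    monotoneOn_of_hasDerivWithinAt_nonneg (convex_Ioi a)
      (fun x hx => (hf x hx).continuousAt.continuousWithinAt)
      (fun x hx => (hf x (interior_subset hx)).hasDerivWithinAt)
      fun x hx => hf' x (interior_subset hx)
  refine le_of_tendsto hlim ?_
  filter_upwards [Ioo_mem_nhdsGT hs] with x hx
  exact hmono hx.1 hs hx.2.le

section BlackScholes

variable {k s : ℝ}

lemma BS_eq_BS_mul_one (k w T : ℝ) : BS k w T = BS k (w * T) 1 := by
  simp only [BS, mul_one]

/-- The factor of the derivative of the call price in the total variance `s` that carries its
behaviour as `s → 0`: the full derivative is `vegaLeading k s * exp (-s / 8)`. -/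
noncomputable def vegaLeading (k s : ℝ) : ℝ :=
  exp (k / 2) / √(2 * π) * (exp (-k ^ 2 / (2 * s)) / (2 * √s))

/-- The leading term of the out-of-the-money call price `BS k s 1` as the total variance `s`
tends to `0`. -/
noncomputable def callLeading (k s : ℝ) : ℝ :=
  exp (k / 2) / √(2 * π) / k ^ 2 * (s * √s * exp (-k ^ 2 / (2 * s)))

lemma vegaLeading_pos (k : ℝ) (hs : 0 < s) : 0 < vegaLeading k s := by
  unfold vegaLeading
  positivity

lemma callLeading_pos (hk : k ≠ 0) (hs : 0 < s) : 0 < callLeading k s := by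
  unfold callLeading
  positivity

lemma callLeading_eq_vegaLeading_mul (hs : 0 < s) :
    callLeading k s = vegaLeading k s * (2 * s ^ 2 / k ^ 2) := by
  have hr : 0 < √s := sqrt_pos.2 hs
  rw [callLeading, vegaLeading, ← sq_sqrt hs.le, sqrt_sq hr.le]
  field_simp

lemma hasDerivAt_BS_one (k : ℝ) (hs : 0 < s) :
    HasDerivAt (fun s => BS k s 1) (vegaLeading k s * exp (-s / 8)) s := by
  obtain ⟨r, hr, rfl⟩ : ∃ r, 0 < r ∧ r ^ 2 = s := ⟨√s, sqrt_pos.2 hs, sq_sqrt hs.le⟩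
  have hsqrt := hasDerivAt_sqrt hs.ne'
  have hquot := (hasDerivAt_const (r ^ 2) (-k)).fun_div hsqrt (sqrt_pos.2 hs).ne'
  have hplus := (hasDerivAt_Phi _).comp _ (hquot.fun_add (hsqrt.div_const 2))
  have hminus := (hasDerivAt_Phi _).comp _ (hquot.fun_sub (hsqrt.div_const 2))
  simp only [sqrt_sq hr.le] at hplus hminus
  have hexp_plus : exp (-((-k / r + r / 2) ^ 2) / 2)
      = exp (k / 2) * exp (-k ^ 2 / (2 * r ^ 2)) * exp (-r ^ 2 / 8) := by
    rw [← exp_add, ← exp_add]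
    congr 1
    field_simp
    ring
  have hexp_minus : exp k * exp (-((-k / r - r / 2) ^ 2) / 2)
      = exp (k / 2) * exp (-k ^ 2 / (2 * r ^ 2)) * exp (-r ^ 2 / 8) := by
    rw [← exp_add, ← exp_add, ← exp_add]
    congr 1
    field_simp
    ring
  simp only [BS, mul_one]
  refine (hplus.sub (hminus.const_mul (exp k))).congr_deriv ?_
  rw [← mul_assoc (exp k), ← mul_div_assoc (exp k), hexp_minus, hexp_plus, vegaLeading,
    sqrt_sq hr.le]
  field_simp
  ring

lemma hasDerivAt_callLeading (hk : k ≠ 0) (hs : 0 < s) :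
    HasDerivAt (callLeading k) (vegaLeading k s * (1 + 3 * s / k ^ 2)) s := by
  have hr : 0 < √s := sqrt_pos.2 hs
  have hexp := ((hasDerivAt_const s (-k ^ 2)).fun_div ((hasDerivAt_id s).const_mul 2)
    (by simpa using hs.ne')).exp
  have hpow := (hasDerivAt_id s).fun_mul (hasDerivAt_sqrt hs.ne')
  refine ((hpow.fun_mul hexp).const_mul (exp (k / 2) / √(2 * π) / k ^ 2)).congr_deriv ?_
  simp only [id, vegaLeading]
  set E := exp (-k ^ 2 / (2 * s))
  rw [← sq_sqrt hs.le, sqrt_sq hr.le]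
  field_simp
  ring

lemma tendsto_BS_one_zero (hk : 0 < k) : Tendsto (fun s => BS k s 1) (𝓝[>] 0) (𝓝 0) := by
  have hsqrt_zero : Tendsto Real.sqrt (𝓝[>] 0) (𝓝 0) :=
    (continuous_sqrt.tendsto' 0 0 sqrt_zero).mono_left nhdsWithin_le_nhds
  have hsqrt_pos : Tendsto Real.sqrt (𝓝[>] 0) (𝓝[>] 0) :=
    tendsto_nhdsWithin_iff.2 ⟨hsqrt_zero, eventually_mem_nhdsWithin.mono fun _ => sqrt_pos.2⟩
  have hquot : Tendsto (fun s => -k / √s) (𝓝[>] 0) atBot :=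
    (tendsto_inv_nhdsGT_zero.comp hsqrt_pos).const_mul_atTop_of_neg (neg_lt_zero.2 hk)
  have hhalf : Tendsto (fun s => √s / 2) (𝓝[>] 0) (𝓝 0) := by
    simpa using hsqrt_zero.div_const 2
  have hplus := tendsto_Phi_atBot.comp (hquot.atBot_add hhalf)
  have hminus := tendsto_Phi_atBot.comp (hquot.atBot_add hhalf.neg)
  simpa [BS, Function.comp_def, ← sub_eq_add_neg] using hplus.sub (hminus.const_mul (exp k))

lemma tendsto_callLeading_zero (k : ℝ) : Tendsto (callLeading k) (𝓝[>] 0) (𝓝 0) := by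
  have hpow : Tendsto (fun s : ℝ => exp (k / 2) / √(2 * π) / k ^ 2 * (s * √s)) (𝓝[>] 0) (𝓝 0) :=
    ((by fun_prop : Continuous fun s : ℝ => _ * (s * √s)).tendsto' 0 0 (by simp)).mono_left
      nhdsWithin_le_nhds
  refine squeeze_zero' ?_ ?_ hpow <;> filter_upwards [self_mem_nhdsWithin] with s hs
  · have hs : 0 < s := hs
    unfold callLeading
    positivity
  · have hs : 0 < s := hs
    have hexp : exp (-k ^ 2 / (2 * s)) ≤ 1 :=
      exp_le_one_iff.2 (div_nonpos_of_nonpos_of_nonneg (neg_nonpos.2 (sq_nonneg k)) (by positivity))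
    exact mul_le_mul_of_nonneg_left (mul_le_of_le_one_right (by positivity) hexp) (by positivity)

lemma BS_one_nonneg (hk : 0 < k) (hs : 0 < s) : 0 ≤ BS k s 1 :=
  nonneg_of_deriv_nonneg_of_tendsto_zero (f := fun s => BS k s 1)
    (fun _ hx => hasDerivAt_BS_one k hx)
    (fun _ hx => mul_nonneg (vegaLeading_pos k hx).le (exp_pos _).le) (tendsto_BS_one_zero hk) hs

lemma BS_one_le_callLeading (hk : 0 < k) (hs : 0 < s) : BS k s 1 ≤ callLeading k s := by
  refine sub_nonneg.1 <| nonneg_of_deriv_nonneg_of_tendsto_zero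
    (f := fun s => callLeading k s - BS k s 1)
    (fun x hx => (hasDerivAt_callLeading hk.ne' hx).sub (hasDerivAt_BS_one k hx)) (fun x hx => ?_)
    (by simpa using (tendsto_callLeading_zero k).sub (tendsto_BS_one_zero hk)) hs
  have hexp : exp (-x / 8) ≤ 1 := exp_le_one_iff.2 (by linarith)
  have hquot : 0 ≤ 3 * x / k ^ 2 := by positivity
  rw [← mul_sub]
  exact mul_nonneg (vegaLeading_pos k hx).le (by linarith)

lemma callLeading_mul_le_BS_one (hk : 0 < k) (hs : 0 < s) :
    callLeading k s * (1 - (3 / k ^ 2 + 1 / 8) * s) ≤ BS k s 1 := by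
  set c := 3 / k ^ 2 + 1 / 8 with hc
  refine sub_nonneg.1 <| nonneg_of_deriv_nonneg_of_tendsto_zero
    (f := fun s => BS k s 1 - callLeading k s * (1 - c * s))
    (fun x hx => (hasDerivAt_BS_one k hx).sub ((hasDerivAt_callLeading hk.ne' hx).mul
      (((hasDerivAt_id x).const_mul c).const_sub 1))) (fun x hx => ?_) ?_ hs
  · have hexp : 1 - x / 8 ≤ exp (-x / 8) := by linarith [add_one_le_exp (-x / 8)]
    have hderiv : vegaLeading k x * exp (-x / 8) - (vegaLeading k x * (1 + 3 * x / k ^ 2)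
          * (1 - c * x) + callLeading k x * -(c * 1))
        = vegaLeading k x * (exp (-x / 8) - (1 - x / 8) + 5 * c * x ^ 2 / k ^ 2) := by
      rw [callLeading_eq_vegaLeading_mul hx, hc]
      field_simp
      ring
    rw [hderiv]
    exact mul_nonneg (vegaLeading_pos k hx).le (add_nonneg (sub_nonneg.2 hexp) (by positivity))
  · have hlin : Tendsto (fun s : ℝ => 1 - c * s) (𝓝[>] 0) (𝓝 1) :=
      ((by fun_prop : Continuous fun s : ℝ => 1 - c * s).tendsto' 0 1 (by simp)).mono_left
        nhdsWithin_le_nhds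
    simpa using (tendsto_BS_one_zero hk).sub ((tendsto_callLeading_zero k).mul hlin)

lemma abs_BS_one_div_callLeading_sub_one_le (hk : 0 < k) (hs : 0 < s) :
    |BS k s 1 / callLeading k s - 1| ≤ (3 / k ^ 2 + 1 / 8) * s := by
  have hpos := callLeading_pos hk.ne' hs
  have hupper := (div_le_one hpos).2 (BS_one_le_callLeading hk hs)
  have hlower := (le_div_iff₀' hpos).2 (callLeading_mul_le_BS_one hk hs)
  exact abs_le.2 ⟨by linarith, by linarith [show 0 ≤ (3 / k ^ 2 + 1 / 8) * s by positivity]⟩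

end BlackScholes

section Beta

variable {a b : ℝ}

lemma integral_Ioo_rpow_mul_one_sub_rpow (ha : 0 < a) (hb : 0 < b) :
    ∫ x in Ioo (0 : ℝ) 1, x ^ (a - 1) * (1 - x) ^ (b - 1) = ProbabilityTheory.beta a b := by
  have hbeta := ProbabilityTheory.beta_pos ha hb
  have hnonneg : 0 ≤ᵐ[volume.restrict (Ioo (0 : ℝ) 1)]
      fun x : ℝ => 1 / ProbabilityTheory.beta a b * x ^ (a - 1) * (1 - x) ^ (b - 1) := by
    filter_upwards [ae_restrict_mem measurableSet_Ioo] with x hx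
    have hx0 := hx.1.le
    have hx1 := sub_nonneg.2 hx.2.le
    positivity
  have hone : ∫ x in Ioo (0 : ℝ) 1,
      1 / ProbabilityTheory.beta a b * x ^ (a - 1) * (1 - x) ^ (b - 1) = 1 := by
    rw [integral_eq_lintegral_of_nonneg_ae hnonneg
      (Measurable.aestronglyMeasurable (by fun_prop)), ← ProbabilityTheory.lintegral_betaPDF,
      ProbabilityTheory.lintegral_betaPDF_eq_one ha hb, ENNReal.toReal_one]
  simp_rw [mul_assoc] at hone
  rwa [integral_const_mul, one_div_mul_eq_div, div_eq_one_iff_eq hbeta.ne'] at hone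

lemma integrableOn_Ioo_rpow_mul_one_sub_rpow (ha : 0 < a) (hb : 0 < b) :
    IntegrableOn (fun x : ℝ => x ^ (a - 1) * (1 - x) ^ (b - 1)) (Ioo 0 1) := by
  by_contra hint
  have hbeta := integral_Ioo_rpow_mul_one_sub_rpow ha hb
  rw [integral_undef hint] at hbeta
  exact (ProbabilityTheory.beta_pos ha hb).ne hbeta

end Beta

section Watson

variable {a x : ℝ}

lemma integrableOn_rpow_mul_exp_neg_mul (ha : 0 < a) (hx : 0 < x) :
    IntegrableOn (fun u : ℝ => u ^ (a - 1) * exp (-(x * u))) (Ioi 0) := by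
  simpa only [rpow_one, neg_mul] using
    integrableOn_rpow_mul_exp_neg_mul_rpow (s := a - 1) (p := 1) (by linarith) one_pos hx

lemma integral_rpow_mul_exp_neg_mul (ha : 0 < a) (hx : 0 < x) :
    ∫ u in Ioi (0 : ℝ), u ^ (a - 1) * exp (-(x * u)) = Gamma a / x ^ a := by
  rw [integral_rpow_mul_exp_neg_mul_Ioi ha hx, one_div, inv_rpow hx.le, inv_mul_eq_div]

/- Watson's lemma to first order: near `u = 0` the amplitude `g` is replaced by its value there. -/
lemma abs_integral_rpow_mul_exp_neg_mul_sub_le {g : ℝ → ℝ} {g₀ M : ℝ} (ha : 0 < a) (hx : 0 < x)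
    (hg : Measurable g) (hgM : ∀ u, 0 < u → |g u - g₀| ≤ M * u) :
    |(∫ u in Ioi (0 : ℝ), g u * (u ^ (a - 1) * exp (-(x * u)))) - g₀ * (Gamma a / x ^ a)|
      ≤ M * (Gamma (a + 1) / x ^ (a + 1)) := by
  have hint := integrableOn_rpow_mul_exp_neg_mul ha hx
  have hmajorant := (integrableOn_rpow_mul_exp_neg_mul (add_pos ha one_pos) hx).const_mul M
  have hbound : ∀ᵐ u ∂volume.restrict (Ioi (0 : ℝ)),
      ‖g u * (u ^ (a - 1) * exp (-(x * u))) - g₀ * (u ^ (a - 1) * exp (-(x * u)))‖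
        ≤ M * (u ^ (a + 1 - 1) * exp (-(x * u))) := by
    filter_upwards [ae_restrict_mem measurableSet_Ioi] with u hu
    have hu : 0 < u := hu
    have hpow : u ^ (a + 1 - 1) = u * u ^ (a - 1) := by
      rw [mul_comm, ← rpow_add_one hu.ne']
      ring_nf
    rw [← sub_mul, norm_mul, norm_eq_abs, norm_of_nonneg (by positivity), hpow, mul_assoc,
      ← mul_assoc M]
    exact mul_le_mul_of_nonneg_right (hgM u hu) (by positivity)
  have hdiff : IntegrableOn (fun u => g u * (u ^ (a - 1) * exp (-(x * u)))
      - g₀ * (u ^ (a - 1) * exp (-(x * u)))) (Ioi 0) :=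
    hmajorant.mono' (Measurable.aestronglyMeasurable (by fun_prop)) hbound
  have hgint : IntegrableOn (fun u => g u * (u ^ (a - 1) * exp (-(x * u)))) (Ioi 0) := by
    simpa [Pi.add_def] using hdiff.add (hint.const_mul g₀)
  rw [← integral_rpow_mul_exp_neg_mul ha hx, ← integral_rpow_mul_exp_neg_mul (by linarith) hx,
    ← integral_const_mul, ← integral_const_mul, ← integral_sub hgint (hint.const_mul g₀)]
  exact norm_integral_le_of_norm_le hmajorant hbound

end Watson

section Bessel

variable {ν x : ℝ}

lemma besselI_term_eq (hν : -(1 / 2) < ν) (hx : 0 < x) (m : ℕ) :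
    (x / 2) ^ (2 * (m : ℝ) + ν) / ((m.factorial : ℝ) * Gamma ((m : ℝ) + ν + 1))
      = (x / 2) ^ ν / (√π * Gamma (ν + 1 / 2))
        * (x ^ (2 * m) / (2 * m).factorial * ProbabilityTheory.beta (m + 1 / 2) (ν + 1 / 2)) := by
  have hdup : Gamma (m + 1 / 2) * m.factorial = (2 * m).factorial / 2 ^ (2 * m) * √π := by
    have h := Gamma_mul_Gamma_add_half ((m : ℝ) + 1 / 2)
    have hexp : 1 - 2 * ((m : ℝ) + 1 / 2) = -((2 * m : ℕ) : ℝ) := by push_cast; ring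
    rw [show (m : ℝ) + 1 / 2 + 1 / 2 = m + 1 by ring, hexp, rpow_neg two_pos.le, rpow_natCast,
      show 2 * ((m : ℝ) + 1 / 2) = ((2 * m : ℕ) : ℝ) + 1 by push_cast; ring,
      Gamma_nat_eq_factorial, Gamma_nat_eq_factorial] at h
    rw [h, div_eq_mul_inv]
  have hpow : (x / 2) ^ (2 * (m : ℝ) + ν) = x ^ (2 * m) / 2 ^ (2 * m) * (x / 2) ^ ν := by
    rw [rpow_add (by positivity), ← div_pow, ← rpow_natCast]
    push_cast
    rfl
  have hΓν : Gamma (ν + 1 / 2) ≠ 0 := (Gamma_pos_of_pos (by linarith)).ne'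
  have hΓ : Gamma ((m : ℝ) + ν + 1) ≠ 0 :=
    (Gamma_pos_of_pos (by linarith [Nat.cast_nonneg (α := ℝ) m])).ne'
  rw [hpow, ProbabilityTheory.beta, eq_div_of_mul_eq (by positivity) hdup,
    show (m : ℝ) + 1 / 2 + (ν + 1 / 2) = m + ν + 1 by ring]
  generalize Gamma (ν + 1 / 2) = Γν at hΓν ⊢
  field_simp

lemma hasSum_cosh_sqrt {w : ℝ} (hw : 0 < w) (x ν : ℝ) :
    HasSum (fun m : ℕ => x ^ (2 * m) / (2 * m).factorial
        * (w ^ ((m : ℝ) + 1 / 2 - 1) * (1 - w) ^ (ν + 1 / 2 - 1)))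
      (w ^ (-(1 / 2) : ℝ) * (1 - w) ^ (ν - 1 / 2) * cosh (x * √w)) := by
  refine ((hasSum_cosh (x * √w)).mul_left _).congr_fun fun m => ?_
  have hpow : w ^ ((m : ℝ) + 1 / 2 - 1) = w ^ m * w ^ (-(1 / 2) : ℝ) := by
    rw [← rpow_natCast, ← rpow_add hw]
    ring_nf
  rw [hpow, mul_pow, pow_mul √w, sq_sqrt hw.le, show ν + 1 / 2 - 1 = ν - 1 / 2 by ring]
  ring

/- Poisson's integral representation: expand `cosh` and integrate termwise, each term being a Beta
integral; the duplication formula for `Γ` turns the coefficients into those of `I_ν`. -/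
lemma hasSum_besselI (hν : -(1 / 2) < ν) (hx : 0 < x) :
    HasSum (fun m : ℕ =>
        (x / 2) ^ (2 * (m : ℝ) + ν) / ((m.factorial : ℝ) * Gamma ((m : ℝ) + ν + 1)))
      ((x / 2) ^ ν / (√π * Gamma (ν + 1 / 2))
        * ∫ w in Ioo (0 : ℝ) 1, w ^ (-(1 / 2) : ℝ) * (1 - w) ^ (ν - 1 / 2) * cosh (x * √w)) := by
  set F : ℕ → ℝ → ℝ := fun m w => x ^ (2 * m) / (2 * m).factorial
    * (w ^ ((m : ℝ) + 1 / 2 - 1) * (1 - w) ^ (ν + 1 / 2 - 1)) with hF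
  have hint (m : ℕ) : IntegrableOn (F m) (Ioo 0 1) :=
    (integrableOn_Ioo_rpow_mul_one_sub_rpow (by positivity) (by linarith)).const_mul _
  have hnorm_le (m : ℕ) : ∫ w in Ioo (0 : ℝ) 1, ‖F m w‖
      ≤ x ^ (2 * m) / (2 * m).factorial
        * ∫ w in Ioo (0 : ℝ) 1, w ^ ((1 / 2 : ℝ) - 1) * (1 - w) ^ (ν + 1 / 2 - 1) := by
    rw [← integral_const_mul]
    refine setIntegral_mono_on (hint m).norm ((integrableOn_Ioo_rpow_mul_one_sub_rpow
      (by positivity) (by linarith)).const_mul _) measurableSet_Ioo fun w hw => ?_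
    have hw0 := hw.1
    have hw1 := sub_pos.2 hw.2
    rw [hF, norm_of_nonneg (by positivity)]
    gcongr ?_ * (?_ * ?_)
    exact rpow_le_rpow_of_exponent_ge hw0 hw.2.le (by linarith [Nat.cast_nonneg (α := ℝ) m])
  have hsummable : Summable fun m => ∫ w in Ioo (0 : ℝ) 1, ‖F m w‖ :=
    .of_nonneg_of_le (fun m => integral_nonneg fun _ => norm_nonneg _) hnorm_le
      ((hasSum_cosh x).summable.mul_right _)
  have hsum := (hasSum_integral_of_summable_integral_norm hint hsummable).mul_left
    ((x / 2) ^ ν / (√π * Gamma (ν + 1 / 2)))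
  rw [setIntegral_congr_fun measurableSet_Ioo
    fun w hw => (hasSum_cosh_sqrt hw.1 x ν).tsum_eq] at hsum
  refine hsum.congr_fun fun m => ?_
  rw [besselI_term_eq hν hx, hF, integral_const_mul,
    integral_Ioo_rpow_mul_one_sub_rpow (by positivity) (by linarith)]

lemma measurable_besselI_comp {α : Type*} [MeasurableSpace α] {g : α → ℝ} (hν : -(1 / 2) < ν)
    (hg : Measurable g) (hpos : ∀ v, 0 < g v) : Measurable fun v => besselI ν (g v) := by
  refine measurable_of_tendsto_metrizable (f := fun n v => ∑ m ∈ Finset.range n,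
    (g v / 2) ^ (2 * (m : ℝ) + ν) / ((m.factorial : ℝ) * Gamma ((m : ℝ) + ν + 1)))
    (fun n => by fun_prop) (tendsto_pi_nhds.2 fun v => ?_)
  exact (hasSum_besselI hν (hpos v)).summable.hasSum.tendsto_sum_nat

lemma setIntegral_Ioo_one_sub_sq (F : ℝ → ℝ) :
    ∫ w in Ioo (0 : ℝ) 1, F w = ∫ u in Ioo (0 : ℝ) 1, 2 * (1 - u) * F ((1 - u) ^ 2) := by
  have himage : (fun u : ℝ => (1 - u) ^ 2) '' Ioo 0 1 = Ioo 0 1 := by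
    ext w
    refine ⟨?_, fun hw => ⟨1 - √w, ⟨?_, ?_⟩, ?_⟩⟩
    · rintro ⟨u, ⟨hu0, hu1⟩, rfl⟩
      exact ⟨pow_pos (sub_pos.2 hu1) 2, pow_lt_one₀ (by linarith) (by linarith) two_ne_zero⟩
    · exact sub_pos.2 ((sqrt_lt' one_pos).2 (by simpa using hw.2))
    · linarith [sqrt_pos.2 hw.1]
    · simp only [sub_sub_cancel, sq_sqrt hw.1.le]
  have hderiv (u : ℝ) : HasDerivAt (fun u : ℝ => (1 - u) ^ 2) (-(2 * (1 - u))) u :=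
    (((hasDerivAt_id u).const_sub 1).fun_pow 2).congr_deriv (by simp)
  have hinj : InjOn (fun u : ℝ => (1 - u) ^ 2) (Ioo 0 1) := fun u hu v hv huv => by
    linarith [(sq_eq_sq₀ (sub_nonneg.2 hu.2.le) (sub_nonneg.2 hv.2.le)).1 huv]
  conv_lhs => rw [← himage, integral_image_eq_integral_abs_deriv_smul measurableSet_Ioo
    (fun u _ => (hderiv u).hasDerivWithinAt) hinj]
  refine setIntegral_congr_fun measurableSet_Ioo fun u hu => ?_
  rw [smul_eq_mul, abs_neg, abs_of_pos (by linarith [hu.2])]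

lemma besselI_eq_integral (hν : -(1 / 2) < ν) (hx : 0 < x) :
    besselI ν x = (x / 2) ^ ν / (√π * Gamma (ν + 1 / 2))
      * ∫ u in Ioo (0 : ℝ) 1, (u * (2 - u)) ^ (ν - 1 / 2) * (2 * cosh (x * (1 - u))) := by
  rw [besselI, (hasSum_besselI hν hx).tsum_eq, setIntegral_Ioo_one_sub_sq]
  congr 1
  refine setIntegral_congr_fun measurableSet_Ioo fun u hu => ?_
  have hu1 : 0 < 1 - u := sub_pos.2 hu.2
  have hpow : ((1 - u) ^ 2) ^ (-(1 / 2) : ℝ) = (1 - u)⁻¹ := by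
    rw [rpow_neg (sq_nonneg _), ← sqrt_eq_rpow, sqrt_sq hu1.le]
  simp only [hpow, sqrt_sq hu1.le, show 1 - (1 - u) ^ 2 = u * (2 - u) by ring]
  field_simp

end Bessel

section BesselAsymptotics

variable {μ ν x : ℝ}

lemma integrableOn_rpow_mul_two_sub_mul (hμ : -1 < μ) {h : ℝ → ℝ} (hh : Continuous h) :
    IntegrableOn (fun u : ℝ => (u * (2 - u)) ^ μ * h u) (Ioo 0 1) := by
  have hrpow : IntegrableOn (fun u : ℝ => u ^ μ) (Icc 0 1) :=
    (intervalIntegrable_iff_integrableOn_Icc_of_le zero_le_one).1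
      (intervalIntegral.intervalIntegrable_rpow' hμ)
  have hcont : ContinuousOn (fun u : ℝ => (2 - u) ^ μ * h u) (Icc 0 1) :=
    ((continuousOn_const.sub continuousOn_id).rpow_const
      fun u hu => Or.inl (show (2 : ℝ) - u ≠ 0 by linarith [hu.2])).mul hh.continuousOn
  refine ((hrpow.mul_continuousOn hcont isCompact_Icc).mono_set Ioo_subset_Icc_self).congr_fun
    (fun u hu => ?_) measurableSet_Ioo
  simp only [mul_rpow hu.1.le (show 0 ≤ 2 - u by linarith [hu.2]), mul_assoc]

lemma exists_abs_indicator_two_sub_rpow_sub_le (μ : ℝ) : ∃ M : ℝ, ∀ u, 0 < u →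
    |(Ioo (0 : ℝ) 1).indicator (fun u => (2 - u) ^ μ) u - 2 ^ μ| ≤ M * u := by
  have hne {u : ℝ} (hu : u ∈ Icc (0 : ℝ) 1) : 2 - u ≠ 0 := by linarith [hu.2]
  have hderiv {u : ℝ} (hu : u ∈ Icc (0 : ℝ) 1) :
      HasDerivWithinAt (fun u : ℝ => (2 - u) ^ μ) (-(μ * (2 - u) ^ (μ - 1))) (Icc 0 1) u :=
    (((hasDerivAt_id u).const_sub 2).rpow_const (Or.inl (hne hu))).hasDerivWithinAt.congr_deriv
      (by simp)
  have hcont : ContinuousOn (fun u : ℝ => -(μ * (2 - u) ^ (μ - 1))) (Icc 0 1) :=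
    (continuousOn_const.mul ((continuousOn_const.sub continuousOn_id).rpow_const
      fun u hu => Or.inl (hne hu))).neg
  obtain ⟨C, hC⟩ := isCompact_Icc.exists_bound_of_continuousOn hcont
  refine ⟨max C (2 ^ μ), fun u hu => ?_⟩
  by_cases hmem : u ∈ Ioo (0 : ℝ) 1
  · have hlip := (convex_Icc (0 : ℝ) 1).norm_image_sub_le_of_norm_hasDerivWithin_le
      (fun _ => hderiv) hC (left_mem_Icc.2 zero_le_one) (Ioo_subset_Icc_self hmem)
    simp only [sub_zero, norm_eq_abs, abs_of_pos hu] at hlip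
    rw [indicator_of_mem hmem]
    exact hlip.trans (mul_le_mul_of_nonneg_right (le_max_left _ _) hu.le)
  · have hu1 : 1 ≤ u := not_lt.1 fun h => hmem ⟨hu, h⟩
    rw [indicator_of_notMem hmem, zero_sub, abs_neg, abs_of_pos (by positivity)]
    exact (le_mul_of_one_le_right (by positivity) hu1).trans
      (mul_le_mul_of_nonneg_right (le_max_right _ _) hu.le)

lemma exists_abs_integral_rpow_mul_exp_neg_sub_le (hμ : -1 < μ) : ∃ M : ℝ, ∀ x, 0 < x →
    |(∫ u in Ioo (0 : ℝ) 1, (u * (2 - u)) ^ μ * exp (-(x * u)))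
        - 2 ^ μ * (Gamma (μ + 1) / x ^ (μ + 1))| ≤ M * (Gamma (μ + 2) / x ^ (μ + 2)) := by
  obtain ⟨M, hM⟩ := exists_abs_indicator_two_sub_rpow_sub_le μ
  refine ⟨M, fun x hx => ?_⟩
  have hwatson := abs_integral_rpow_mul_exp_neg_mul_sub_le (a := μ + 1) (by linarith) hx
    (Measurable.indicator (by fun_prop) measurableSet_Ioo) hM
  rw [add_sub_cancel_right, add_assoc, one_add_one_eq_two] at hwatson
  convert hwatson using 3
  have hindicator (u : ℝ) : (Ioo (0 : ℝ) 1).indicator (fun u => (2 - u) ^ μ) u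
      * (u ^ μ * exp (-(x * u)))
      = (Ioo (0 : ℝ) 1).indicator (fun u => (2 - u) ^ μ * (u ^ μ * exp (-(x * u)))) u :=
    (indicator_mul_left _ (fun u => (2 - u) ^ μ) fun u => u ^ μ * exp (-(x * u))).symm
  simp only [hindicator]
  rw [setIntegral_indicator measurableSet_Ioo, inter_eq_right.2 Ioo_subset_Ioi_self]
  refine setIntegral_congr_fun measurableSet_Ioo fun u hu => ?_
  simp only [mul_rpow hu.1.le (show 0 ≤ 2 - u by linarith [hu.2])]
  ring

lemma rpow_mul_exp_neg_le {a : ℝ} (ha : 0 ≤ a) (hx : 0 ≤ x) : x ^ a * exp (-x) ≤ a ^ a := by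
  have h := ProbabilityTheory.rpow_abs_le_mul_exp_abs x ha one_ne_zero
  rw [abs_one, div_one, one_mul, abs_of_nonneg hx] at h
  rwa [exp_neg, mul_inv_le_iff₀ (exp_pos x)]

lemma exists_abs_integral_rpow_mul_exp_neg_two_sub_le (hμ : -1 < μ) : ∃ C : ℝ, ∀ x, 0 < x →
    |∫ u in Ioo (0 : ℝ) 1, (u * (2 - u)) ^ μ * exp (-(x * (2 - u)))| ≤ C / x ^ (μ + 2) := by
  refine ⟨(∫ u in Ioo (0 : ℝ) 1, (u * (2 - u)) ^ μ) * (μ + 2) ^ (μ + 2), fun x hx => ?_⟩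
  have hweight {u : ℝ} (hu : u ∈ Ioo (0 : ℝ) 1) : 0 ≤ (u * (2 - u)) ^ μ :=
    rpow_nonneg (mul_nonneg hu.1.le (by linarith [hu.2])) μ
  have hdecay : exp (-x) ≤ (μ + 2) ^ (μ + 2) / x ^ (μ + 2) := by
    rw [le_div_iff₀' (by positivity)]
    exact rpow_mul_exp_neg_le (by linarith) hx.le
  rw [abs_of_nonneg (setIntegral_nonneg measurableSet_Ioo
    fun u hu => mul_nonneg (hweight hu) (exp_pos _).le)]
  calc ∫ u in Ioo (0 : ℝ) 1, (u * (2 - u)) ^ μ * exp (-(x * (2 - u)))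
      ≤ ∫ u in Ioo (0 : ℝ) 1, (u * (2 - u)) ^ μ * exp (-x) :=
        setIntegral_mono_on (integrableOn_rpow_mul_two_sub_mul hμ (by fun_prop))
          (integrableOn_rpow_mul_two_sub_mul hμ continuous_const) measurableSet_Ioo fun u hu =>
          mul_le_mul_of_nonneg_left (exp_le_exp.2 (by nlinarith [hu.2])) (hweight hu)
    _ = (∫ u in Ioo (0 : ℝ) 1, (u * (2 - u)) ^ μ) * exp (-x) := integral_mul_const _ _
    _ ≤ (∫ u in Ioo (0 : ℝ) 1, (u * (2 - u)) ^ μ) * ((μ + 2) ^ (μ + 2) / x ^ (μ + 2)) :=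
        mul_le_mul_of_nonneg_left hdecay (setIntegral_nonneg measurableSet_Ioo fun _ => hweight)
    _ = _ := (mul_div_assoc _ _ _).symm

lemma besselI_mul_sqrt_mul_exp_neg_eq (hν : -(1 / 2) < ν) (hx : 0 < x) :
    besselI ν x * √(2 * π * x) * exp (-x)
      = x ^ (ν + 1 / 2) / (2 ^ (ν - 1 / 2) * Gamma (ν + 1 / 2))
        * ((∫ u in Ioo (0 : ℝ) 1, (u * (2 - u)) ^ (ν - 1 / 2) * exp (-(x * u)))
          + ∫ u in Ioo (0 : ℝ) 1, (u * (2 - u)) ^ (ν - 1 / 2) * exp (-(x * (2 - u)))) := by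
  have hμ : -1 < ν - 1 / 2 := by linarith
  have hcosh (u : ℝ) : 2 * cosh (x * (1 - u)) * exp (-x)
      = exp (-(x * u)) + exp (-(x * (2 - u))) := by
    rw [cosh_eq, mul_div_cancel₀ _ two_ne_zero, add_mul, ← exp_add, ← exp_add]
    ring_nf
  have hconst : (x / 2) ^ ν * √(2 * π * x) = √π * (x ^ (ν + 1 / 2) / 2 ^ (ν - 1 / 2)) := by
    rw [show 2 * π * x = π * (2 * x) by ring, sqrt_mul pi_pos.le, sqrt_mul two_pos.le,
      div_rpow hx.le two_pos.le, rpow_add hx, rpow_sub two_pos, ← sqrt_eq_rpow, ← sqrt_eq_rpow]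
    field_simp
  rw [← integral_add (integrableOn_rpow_mul_two_sub_mul hμ (by fun_prop))
    (integrableOn_rpow_mul_two_sub_mul hμ (by fun_prop))]
  simp_rw [← mul_add, ← hcosh, ← mul_assoc _ _ (exp (-x))]
  rw [integral_mul_const, besselI_eq_integral hν hx]
  set I := ∫ u in Ioo (0 : ℝ) 1, (u * (2 - u)) ^ (ν - 1 / 2) * (2 * cosh (x * (1 - u)))
  calc (x / 2) ^ ν / (√π * Gamma (ν + 1 / 2)) * I * √(2 * π * x) * exp (-x)
      = (x / 2) ^ ν * √(2 * π * x) / (√π * Gamma (ν + 1 / 2)) * (I * exp (-x)) := by ring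
    _ = _ := by rw [hconst, mul_div_mul_left _ _ (sqrt_pos.2 pi_pos).ne', div_div]

lemma exists_abs_besselI_mul_sqrt_mul_exp_neg_sub_one_le (hν : -(1 / 2) < ν) : ∃ K : ℝ,
    ∀ x, 0 < x → |besselI ν x * √(2 * π * x) * exp (-x) - 1| ≤ K / x := by
  obtain ⟨μ, rfl⟩ : ∃ μ, ν = μ + 1 / 2 := ⟨ν - 1 / 2, by ring⟩
  have hμ : -1 < μ := by linarith
  obtain ⟨M, hM⟩ := exists_abs_integral_rpow_mul_exp_neg_sub_le hμ
  obtain ⟨C, hC⟩ := exists_abs_integral_rpow_mul_exp_neg_two_sub_le hμ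
  set Γμ := Gamma (μ + 1) with hΓμ
  have hΓ_pos : 0 < Γμ := Gamma_pos_of_pos (by linarith)
  have hΓ_succ : Gamma (μ + 2) = (μ + 1) * Γμ := by
    rw [← Gamma_add_one (by linarith), add_assoc, one_add_one_eq_two]
  refine ⟨M * (μ + 1) / 2 ^ μ + C / (2 ^ μ * Γμ), fun x hx => ?_⟩
  have hx_succ : x ^ (μ + 2) = x ^ (μ + 1) * x := by
    rw [← rpow_add_one hx.ne', add_assoc, one_add_one_eq_two]
  rw [besselI_mul_sqrt_mul_exp_neg_eq hν hx, add_sub_cancel_right, add_assoc, add_halves, ← hΓμ]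
  set J₁ := ∫ u in Ioo (0 : ℝ) 1, (u * (2 - u)) ^ μ * exp (-(x * u))
  set J₂ := ∫ u in Ioo (0 : ℝ) 1, (u * (2 - u)) ^ μ * exp (-(x * (2 - u)))
  set P := x ^ (μ + 1) / (2 ^ μ * Γμ) with hP
  have hP_pos : 0 < P := by positivity
  have hsplit : P * (J₁ + J₂) - 1 = P * (J₁ - 2 ^ μ * (Γμ / x ^ (μ + 1))) + P * J₂ := by
    rw [hP]
    field_simp
    ring
  calc |P * (J₁ + J₂) - 1|
      ≤ P * |J₁ - 2 ^ μ * (Γμ / x ^ (μ + 1))| + P * |J₂| := by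
        rw [hsplit, ← abs_of_pos hP_pos, ← abs_mul, ← abs_mul, abs_of_pos hP_pos]
        exact abs_add_le _ _
    _ ≤ P * (M * (Gamma (μ + 2) / x ^ (μ + 2))) + P * (C / x ^ (μ + 2)) := by
        gcongr
        exacts [hM x hx, hC x hx]
    _ = _ := by
        rw [hP, hΓ_succ, hx_succ]
        field_simp

end BesselAsymptotics

section Laplace

lemma abs_exp_sub_exp_le_abs_sub_mul_exp {a b m : ℝ} (ha : a ≤ m) (hb : b ≤ m) :
    |exp a - exp b| ≤ |a - b| * exp m := by
  wlog hba : b ≤ a generalizing a b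
  · rw [abs_sub_comm, abs_sub_comm a]
    exact this hb ha (le_of_not_ge hba)
  have htangent := add_one_le_exp (b - a)
  rw [abs_of_nonneg (sub_nonneg.2 (exp_le_exp.2 hba)), abs_of_nonneg (sub_nonneg.2 hba)]
  calc exp a - exp b = (1 - exp (b - a)) * exp a := by
        rw [sub_mul, one_mul, ← exp_add, sub_add_cancel]
    _ ≤ (a - b) * exp m :=
        mul_le_mul (by linarith) (exp_le_exp.2 ha) (exp_pos a).le (sub_nonneg.2 hba)

lemma integral_exp_neg_mul_sq_add_mul {H : ℝ} (hH : 0 < H) (G : ℝ) :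
    ∫ v, exp (-(H / 2) * v ^ 2 + G * v) = √(2 * π / H) * exp (G ^ 2 / (2 * H)) := by
  have hsquare (v : ℝ) : exp (-(H / 2) * v ^ 2 + G * v)
      = exp (-(H / 2) * (v - G / H) ^ 2) * exp (G ^ 2 / (2 * H)) := by
    rw [← exp_add]
    congr 1
    field_simp
    ring
  simp_rw [hsquare]
  rw [integral_mul_const, integral_sub_right_eq_self fun v => exp (-(H / 2) * v ^ 2),
    integral_gaussian]
  congr 2
  field_simp

lemma integrable_exp_mul_abs_mul_exp_neg_mul_sq (c : ℝ) {κ : ℝ} (hκ : 0 < κ) :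
    Integrable fun v : ℝ => exp (c * |v|) * exp (-κ * v ^ 2) := by
  refine ((integrable_exp_neg_mul_sq (half_pos hκ)).const_mul (exp (c ^ 2 / (2 * κ)))).mono'
    (by fun_prop) (ae_of_all _ fun v => ?_)
  rw [norm_of_nonneg (by positivity), ← exp_add, ← exp_add, exp_le_exp, ← sq_abs v]
  have hsquare : c ^ 2 / (2 * κ) + -(κ / 2) * |v| ^ 2 - (c * |v| + -κ * |v| ^ 2)
      = κ / 2 * (|v| - c / κ) ^ 2 := by
    field_simp
    ring
  linarith [show 0 ≤ κ / 2 * (|v| - c / κ) ^ 2 by positivity]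

/-- A pair of phases for Laplace's method in the small parameter `δ` at two scales, the integrand
being `exp (-ψ (δ * v) / δ ^ 2 + χ (δ * v) / δ)` in the blown-up variable `v`. Here `H` is the
second derivative of `ψ` at its minimum `0` and `G` the first derivative of `χ` there; coercivity
makes `ψ` dominate both a parabola and `χ ^ 2`. -/
structure IsLaplacePhase (ψ χ : ℝ → ℝ) (H G : ℝ) : Prop where
  measurable_fst : Measurable ψ
  measurable_snd : Measurable χ
  isBigO_fst : (fun w => ψ w - H / 2 * w ^ 2) =O[𝓝 0] fun w => w ^ 3
  isBigO_snd : (fun w => χ w - G * w) =O[𝓝 0] fun w => w ^ 2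
  coercive : ∃ κ > 0, ∃ l > 0, ∀ w, κ * w ^ 2 + l * χ w ^ 2 ≤ ψ w

/-- The exponent in Laplace's method for the phases `ψ` and `χ`, in the blown-up variable. -/
noncomputable def laplaceExponent (ψ χ : ℝ → ℝ) (δ v : ℝ) : ℝ :=
  -ψ (δ * v) / δ ^ 2 + χ (δ * v) / δ

variable {ψ χ : ℝ → ℝ} {H G κ l δ v : ℝ}

lemma laplaceExponent_le (hl : 0 < l) (hcoercive : ∀ w, κ * w ^ 2 + l * χ w ^ 2 ≤ ψ w)
    (hδ : 0 < δ) (v : ℝ) : laplaceExponent ψ χ δ v ≤ 1 / (4 * l) - κ * v ^ 2 := by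
  have hsquare : 0 ≤ l * (χ (δ * v) / δ - 1 / (2 * l)) ^ 2 := by positivity
  have hψ : κ * v ^ 2 + l * (χ (δ * v) / δ) ^ 2 ≤ ψ (δ * v) / δ ^ 2 := by
    rw [le_div_iff₀ (by positivity)]
    refine le_trans (le_of_eq ?_) (hcoercive (δ * v))
    field_simp
  have hexpand : l * (χ (δ * v) / δ - 1 / (2 * l)) ^ 2
      = l * (χ (δ * v) / δ) ^ 2 - χ (δ * v) / δ + 1 / (4 * l) := by
    field_simp
    ring
  rw [laplaceExponent, neg_div]
  linarith

namespace IsLaplacePhase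

lemma exists_abs_laplaceExponent_sub_le (h : IsLaplacePhase ψ χ H G) :
    ∃ r > 0, ∃ a ≥ 0, ∃ b ≥ 0, ∀ δ v, 0 < δ → δ * |v| < r →
      |laplaceExponent ψ χ δ v - (-(H / 2) * v ^ 2 + G * v)| ≤ δ * (a * |v| ^ 3 + b * |v| ^ 2) := by
  obtain ⟨a, ha, hψ⟩ := h.isBigO_fst.exists_nonneg
  obtain ⟨b, hb, hχ⟩ := h.isBigO_snd.exists_nonneg
  obtain ⟨r, hr, hball⟩ := Metric.eventually_nhds_iff.1 (hψ.bound.and hχ.bound)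
  refine ⟨r, hr, a, ha, b, hb, fun δ v hδ hv => ?_⟩
  have hδv : |δ * v| = δ * |v| := by rw [abs_mul, abs_of_pos hδ]
  obtain ⟨hψv, hχv⟩ := hball (y := δ * v) (by rwa [dist_zero_right, norm_eq_abs, hδv])
  simp only [norm_eq_abs, abs_pow, hδv] at hψv hχv
  have hsplit : laplaceExponent ψ χ δ v - (-(H / 2) * v ^ 2 + G * v)
      = -(ψ (δ * v) - H / 2 * (δ * v) ^ 2) / δ ^ 2 + (χ (δ * v) - G * (δ * v)) / δ := by
    rw [laplaceExponent]
    field_simp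
    ring
  calc |laplaceExponent ψ χ δ v - (-(H / 2) * v ^ 2 + G * v)|
      ≤ |ψ (δ * v) - H / 2 * (δ * v) ^ 2| / δ ^ 2 + |χ (δ * v) - G * (δ * v)| / δ := by
        rw [hsplit]
        refine (abs_add_le _ _).trans_eq ?_
        rw [abs_div, abs_div, abs_neg, abs_of_pos hδ, abs_of_pos (pow_pos hδ 2)]
    _ ≤ a * (δ * |v|) ^ 3 / δ ^ 2 + b * (δ * |v|) ^ 2 / δ := by gcongr
    _ = δ * (a * |v| ^ 3 + b * |v| ^ 2) := by field_simp

lemma tendsto_laplaceExponent (h : IsLaplacePhase ψ χ H G) (v : ℝ) :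
    Tendsto (fun δ => laplaceExponent ψ χ δ v) (𝓝[>] 0) (𝓝 (-(H / 2) * v ^ 2 + G * v)) := by
  obtain ⟨r, hr, a, -, b, -, hbound⟩ := h.exists_abs_laplaceExponent_sub_le
  have hlinear (c : ℝ) : Tendsto (fun δ : ℝ => δ * c) (𝓝[>] 0) (𝓝 0) :=
    ((continuous_mul_const c).tendsto' 0 0 (zero_mul c)).mono_left nhdsWithin_le_nhds
  refine tendsto_iff_norm_sub_tendsto_zero.2 <|
    squeeze_zero' (Eventually.of_forall fun _ => norm_nonneg _) ?_
    (hlinear (a * |v| ^ 3 + b * |v| ^ 2))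
  filter_upwards [self_mem_nhdsWithin, (hlinear |v|).eventually (gt_mem_nhds hr)] with δ hδ hv
  exact hbound δ v hδ hv

lemma neg_mul_sq_add_mul_le (h : IsLaplacePhase ψ χ H G) (hl : 0 < l)
    (hcoercive : ∀ w, κ * w ^ 2 + l * χ w ^ 2 ≤ ψ w) (v : ℝ) :
    -(H / 2) * v ^ 2 + G * v ≤ 1 / (4 * l) - κ * v ^ 2 :=
  le_of_tendsto (h.tendsto_laplaceExponent v) <| by
    filter_upwards [self_mem_nhdsWithin] with δ hδ
    exact laplaceExponent_le hl hcoercive hδ v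

/- Where `δ * |v|` is small the exponents are close; elsewhere `1 ≤ δ * |v| / r`, so that already
the trivial bound on the difference is of the required order. -/
lemma exists_abs_exp_laplaceExponent_sub_exp_le (h : IsLaplacePhase ψ χ H G) (hl : 0 < l)
    (hcoercive : ∀ w, κ * w ^ 2 + l * χ w ^ 2 ≤ ψ w) : ∃ K ≥ 0, ∀ δ v, 0 < δ →
      |exp (laplaceExponent ψ χ δ v) - exp (-(H / 2) * v ^ 2 + G * v)|
        ≤ K * δ * exp |v| * exp (1 / (4 * l) - κ * v ^ 2) := by
  obtain ⟨r, hr, a, ha, b, hb, hnear⟩ := h.exists_abs_laplaceExponent_sub_le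
  refine ⟨6 * a + 2 * b + 1 / r, by positivity, fun δ v hδ => ?_⟩
  have hδ_le := laplaceExponent_le hl hcoercive hδ v
  have h0_le := h.neg_mul_sq_add_mul_le hl hcoercive v
  have hpow (n : ℕ) : |v| ^ n ≤ n.factorial * exp |v| := by
    rw [← div_le_iff₀' (by positivity)]
    exact pow_div_factorial_le_exp _ (abs_nonneg v) n
  have hpow_one := hpow 1
  have hpow_two := hpow 2
  have hpow_three := hpow 3
  norm_num [Nat.factorial] at hpow_one hpow_two hpow_three
  rcases lt_or_ge (δ * |v|) r with hv | hv
  · refine (abs_exp_sub_exp_le_abs_sub_mul_exp hδ_le h0_le).trans ?_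
    gcongr
    calc |laplaceExponent ψ χ δ v - (-(H / 2) * v ^ 2 + G * v)|
        ≤ δ * (a * |v| ^ 3 + b * |v| ^ 2) := hnear δ v hδ hv
      _ ≤ δ * (a * (6 * exp |v|) + b * (2 * exp |v|)) := by
          rw [sq_abs]
          gcongr
      _ = (6 * a + 2 * b) * δ * exp |v| := by ring
      _ ≤ (6 * a + 2 * b + 1 / r) * δ * exp |v| := by
          rw [mul_assoc, mul_assoc]
          exact mul_le_mul_of_nonneg_right (le_add_of_nonneg_right (by positivity)) (by positivity)
  · have htrivial : |exp (laplaceExponent ψ χ δ v) - exp (-(H / 2) * v ^ 2 + G * v)|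
        ≤ exp (1 / (4 * l) - κ * v ^ 2) :=
      abs_sub_le_of_nonneg_of_le (exp_pos _).le (exp_le_exp.2 hδ_le) (exp_pos _).le
        (exp_le_exp.2 h0_le)
    refine htrivial.trans (le_mul_of_one_le_left (exp_pos _).le ?_)
    calc 1 ≤ 1 / r * δ * |v| := by rwa [mul_assoc, one_div_mul_eq_div, one_le_div hr]
      _ ≤ (6 * a + 2 * b + 1 / r) * δ * exp |v| := by
          gcongr
          exact le_add_of_nonneg_left (by positivity)

lemma exists_abs_mul_exp_laplaceExponent_sub_exp_le (h : IsLaplacePhase ψ χ H G) {K₀ c : ℝ}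
    (hK₀ : 0 ≤ K₀) (hc : 0 ≤ c) (hl : 0 < l) (hcoercive : ∀ w, κ * w ^ 2 + l * χ w ^ 2 ≤ ψ w) :
    ∃ K, ∀ δ, 0 < δ → δ ≤ 1 → ∀ v a : ℝ, |a - 1| ≤ K₀ * (δ + |δ * v|) * exp (c * |δ * v|) →
      |a * exp (laplaceExponent ψ χ δ v) - exp (-(H / 2) * v ^ 2 + G * v)|
        ≤ K * δ * (exp ((c + 1) * |v|) * exp (-κ * v ^ 2)) := by
  obtain ⟨K, hK, hexp⟩ := h.exists_abs_exp_laplaceExponent_sub_exp_le hl hcoercive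
  refine ⟨(K₀ + K) * exp (1 / (4 * l)), fun δ hδ hδ1 v a ha => ?_⟩
  set M := exp (1 / (4 * l) - κ * v ^ 2) with hM
  have hM_eq : exp (1 / (4 * l)) * exp (-κ * v ^ 2) = M := by
    rw [hM, ← exp_add]
    ring_nf
  have hamplitude : |a - 1| ≤ K₀ * δ * exp ((c + 1) * |v|) := by
    have hδv : |δ * v| ≤ |v| := by
      rw [abs_mul, abs_of_pos hδ]
      exact mul_le_of_le_one_left (abs_nonneg v) hδ1
    calc |a - 1| ≤ K₀ * (δ + |δ * v|) * exp (c * |δ * v|) := ha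
      _ = K₀ * δ * ((|v| + 1) * exp (c * |δ * v|)) := by
          rw [abs_mul, abs_of_pos hδ]
          ring
      _ ≤ K₀ * δ * (exp |v| * exp (c * |v|)) := by
          gcongr
          exact add_one_le_exp |v|
      _ = K₀ * δ * exp ((c + 1) * |v|) := by
          rw [← exp_add]
          ring_nf
  calc |a * exp (laplaceExponent ψ χ δ v) - exp (-(H / 2) * v ^ 2 + G * v)|
      = |(a - 1) * exp (laplaceExponent ψ χ δ v)
          + (exp (laplaceExponent ψ χ δ v) - exp (-(H / 2) * v ^ 2 + G * v))| := by ring_nf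
    _ ≤ |a - 1| * exp (laplaceExponent ψ χ δ v)
        + |exp (laplaceExponent ψ χ δ v) - exp (-(H / 2) * v ^ 2 + G * v)| := by
        refine (abs_add_le _ _).trans_eq ?_
        rw [abs_mul, abs_of_pos (exp_pos _)]
    _ ≤ K₀ * δ * exp ((c + 1) * |v|) * M + K * δ * exp ((c + 1) * |v|) * M := by
        have hexp_le := exp_le_exp.2 (laplaceExponent_le hl hcoercive hδ v)
        refine add_le_add (mul_le_mul hamplitude hexp_le (exp_pos _).le (by positivity))
          ((hexp δ v hδ).trans ?_)
        gcongr
        exact le_mul_of_one_le_left (abs_nonneg v) (by linarith)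
    _ = (K₀ + K) * exp (1 / (4 * l)) * δ * (exp ((c + 1) * |v|) * exp (-κ * v ^ 2)) := by
        rw [← hM_eq]
        ring

lemma exists_abs_integral_mul_exp_laplaceExponent_sub_le (h : IsLaplacePhase ψ χ H G) {K₀ c : ℝ}
    (hK₀ : 0 ≤ K₀) (hc : 0 ≤ c) : ∃ K, ∀ δ, 0 < δ → δ ≤ 1 → ∀ g : ℝ → ℝ, Measurable g →
      (∀ w, |g w - 1| ≤ K₀ * (δ + |w|) * exp (c * |w|)) →
      |(∫ v, g (δ * v) * exp (laplaceExponent ψ χ δ v)) - ∫ v, exp (-(H / 2) * v ^ 2 + G * v)|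
        ≤ K * δ := by
  obtain ⟨κ, hκ, l, hl, hcoercive⟩ := h.coercive
  obtain ⟨K, hK⟩ := h.exists_abs_mul_exp_laplaceExponent_sub_exp_le hK₀ hc hl hcoercive
  have hmajorant := integrable_exp_mul_abs_mul_exp_neg_mul_sq (c + 1) hκ
  refine ⟨K * ∫ v, exp ((c + 1) * |v|) * exp (-κ * v ^ 2), fun δ hδ hδ1 g hg hg1 => ?_⟩
  have hbound := ae_of_all volume fun v => hK δ hδ hδ1 v (g (δ * v)) (hg1 (δ * v))
  have hgauss : Integrable fun v => exp (-(H / 2) * v ^ 2 + G * v) := by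
    refine (integrable_exp_neg_mul_sq hκ).const_mul (exp (1 / (4 * l))) |>.mono'
      (by fun_prop) (ae_of_all _ fun v => ?_)
    rw [norm_of_nonneg (exp_pos _).le, ← exp_add, exp_le_exp, neg_mul κ, ← sub_eq_add_neg]
    exact h.neg_mul_sq_add_mul_le hl hcoercive v
  have hmeas : Measurable fun v => g (δ * v) * exp (laplaceExponent ψ χ δ v) := by
    have hψ := h.measurable_fst
    have hχ := h.measurable_snd
    unfold laplaceExponent
    fun_prop
  have hdiff := (hmajorant.const_mul (K * δ)).mono'
    (hmeas.aestronglyMeasurable.sub hgauss.aestronglyMeasurable) hbound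
  have hint : Integrable fun v => g (δ * v) * exp (laplaceExponent ψ χ δ v) :=
    (hdiff.add hgauss).congr (ae_of_all _ fun v => sub_add_cancel _ _)
  rw [← integral_sub hint hgauss, ← norm_eq_abs]
  refine (norm_integral_le_of_norm_le (hmajorant.const_mul (K * δ)) hbound).trans_eq ?_
  rw [integral_const_mul]
  ring

end IsLaplacePhase

end Laplace

section ExponentialPhases

variable {q : ℝ}

lemma isBigO_exp_mul_sub_sum_range (a : ℝ) (n : ℕ) :
    (fun w => exp (a * w) - ∑ i ∈ Finset.range n, (a * w) ^ i / i.factorial)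
      =O[𝓝 0] fun w => w ^ n := by
  have hlim : Tendsto (fun w : ℝ => a * w) (𝓝 0) (𝓝 0) :=
    (continuous_const_mul a).tendsto' 0 0 (mul_zero a)
  refine ((exp_sub_sum_range_isBigO_pow n).comp_tendsto hlim).trans ?_
  simp only [Function.comp_def, mul_pow]
  exact isBigO_const_mul_self _ _ _

lemma half_min_one_mul_sq_le (hq : 0 < q) (w : ℝ) :
    min 1 q / 2 * w ^ 2 ≤ exp (-w) - 1 + w + (exp (q * w) - 1 - q * w) / q := by
  have hneg : 0 ≤ exp (-w) - 1 + w := by linarith [add_one_le_exp (-w)]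
  have hpos : 0 ≤ (exp (q * w) - 1 - q * w) / q :=
    div_nonneg (by linarith [add_one_le_exp (q * w)]) hq.le
  rcases le_total 0 w with hw | hw
  · have hquad : q / 2 * w ^ 2 ≤ (exp (q * w) - 1 - q * w) / q := by
      rw [le_div_iff₀ hq]
      linarith [quadratic_le_exp_of_nonneg (mul_nonneg hq.le hw)]
    have hmin : min 1 q / 2 * w ^ 2 ≤ q / 2 * w ^ 2 := by gcongr; exact min_le_right _ _
    linarith
  · have hquad := quadratic_le_exp_of_nonneg (neg_nonneg.2 hw)
    have hmin : min 1 q / 2 * w ^ 2 ≤ 1 / 2 * w ^ 2 := by gcongr; exact min_le_left _ _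
    linarith [neg_sq w]

/- With `X = exp (q * w) - 1`, the first phase is `A` times
`(exp (-w) - 1 + w) + (X - q * w) / q + X ^ 2 / (2 * q)`. -/
lemma isLaplacePhase_exp {A : ℝ} (hA : 0 < A) (B : ℝ) (hq : 0 < q) :
    IsLaplacePhase (fun w => A * (exp (-w) - 1) + A / (2 * q) * (exp (2 * q * w) - 1))
      (fun w => B * (exp (q * w) - 1)) (A * (1 + 2 * q)) (B * q) where
  measurable_fst := by fun_prop
  measurable_snd := by fun_prop
  isBigO_fst := by
    refine (((isBigO_exp_mul_sub_sum_range (-1) 3).const_mul_left A).add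
      ((isBigO_exp_mul_sub_sum_range (2 * q) 3).const_mul_left (A / (2 * q)))).congr_left
      fun w => ?_
    simp only [Finset.sum_range_succ, Finset.sum_range_zero, Nat.factorial]
    field_simp
    push_cast
    ring_nf
  isBigO_snd := by
    refine ((isBigO_exp_mul_sub_sum_range q 2).const_mul_left B).congr_left fun w => ?_
    simp only [Finset.sum_range_succ, Finset.sum_range_zero, Nat.factorial]
    push_cast
    ring
  coercive := by
    refine ⟨A * (min 1 q / 2), by positivity, A / (2 * q * (B ^ 2 + 1)), by positivity,
      fun w => ?_⟩
    have hquad := mul_le_mul_of_nonneg_left (half_min_one_mul_sq_le hq w) hA.le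
    have hdouble : exp (2 * q * w) = exp (q * w) ^ 2 := by rw [← exp_nat_mul]; ring_nf
    have hχ : A / (2 * q * (B ^ 2 + 1)) * (B * (exp (q * w) - 1)) ^ 2
        ≤ A / (2 * q) * (exp (q * w) - 1) ^ 2 := by
      have hfraction : B ^ 2 / (B ^ 2 + 1) ≤ 1 := (div_le_one (by positivity)).2 (by linarith)
      calc A / (2 * q * (B ^ 2 + 1)) * (B * (exp (q * w) - 1)) ^ 2
          = B ^ 2 / (B ^ 2 + 1) * (A / (2 * q) * (exp (q * w) - 1) ^ 2) := by field_simp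
        _ ≤ _ := mul_le_of_le_one_left (by positivity) hfraction
    have hsplit : A * (exp (-w) - 1) + A / (2 * q) * (exp (q * w) ^ 2 - 1)
        = A * (exp (-w) - 1 + w + (exp (q * w) - 1 - q * w) / q)
          + A / (2 * q) * (exp (q * w) - 1) ^ 2 := by
      field_simp
      ring
    rw [hdouble, hsplit, mul_assoc]
    exact add_le_add hquad hχ

end ExponentialPhases

section CEV

/-- The leading phase `f₀` of the call price in the CEV model: the exponent of the Black–Scholes
price against that of the density. -/
noncomputable def cevPhase (t ξ p k y : ℝ) : ℝ :=
  k ^ 2 / (2 * y) + y ^ (2 * (1 - p)) / (2 * ξ ^ 2 * t * (1 - p) ^ 2)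

/-- The subleading phase `f₁` of the call price in the CEV model; it is also the argument of the
Bessel function in the density. -/
noncomputable def cevSubphase (t ξ y0 p y : ℝ) : ℝ :=
  (y * y0) ^ (1 - p) / (ξ ^ 2 * t * (1 - p) ^ 2)

/-- The minimizer `ȳ_p` of `cevPhase`. -/
noncomputable def cevSaddle (t ξ p k : ℝ) : ℝ :=
  (k ^ 2 * ξ ^ 2 * t * (1 - p) / 2) ^ (1 / (3 - 2 * p))

variable {t ξ y0 p k y : ℝ}

lemma cevSubphase_pos (ht : 0 < t) (hξ : ξ ≠ 0) (hy0 : 0 < y0) (hp : p < 1) (hy : 0 < y) :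
    0 < cevSubphase t ξ y0 p y := by
  have : 0 < 1 - p := sub_pos.2 hp
  unfold cevSubphase
  positivity

lemma cevSubphase_mul {c : ℝ} (t ξ p : ℝ) (hy0 : 0 ≤ y0) (hy : 0 ≤ y) (hc : 0 ≤ c) :
    cevSubphase t ξ y0 p (y * c) = cevSubphase t ξ y0 p y * c ^ (1 - p) := by
  rw [cevSubphase, cevSubphase, mul_right_comm, mul_rpow (mul_nonneg hy hy0) hc, mul_div_right_comm]

lemma cevSaddle_pos (ht : 0 < t) (hξ : ξ ≠ 0) (hp : p < 1) (hk : k ≠ 0) :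
    0 < cevSaddle t ξ p k := by
  have : 0 < 1 - p := sub_pos.2 hp
  unfold cevSaddle
  positivity

lemma mul_deriv_cevSubphase (t ξ p : ℝ) (hy0 : 0 < y0) (hy : 0 < y) :
    y * deriv (cevSubphase t ξ y0 p) y = cevSubphase t ξ y0 p y * (1 - p) := by
  have hderiv := ((((hasDerivAt_id y).mul_const y0).rpow_const (p := 1 - p)
    (Or.inl (mul_pos hy hy0).ne')).div_const (ξ ^ 2 * t * (1 - p) ^ 2)).deriv
  simp only [id] at hderiv
  unfold cevSubphase
  rw [hderiv, rpow_sub_one (by positivity)]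
  field_simp

lemma hasDerivAt_cevPhase (t ξ p k : ℝ) (hy : 0 < y) :
    HasDerivAt (cevPhase t ξ p k) (-(k ^ 2 / 2) * (y ^ 2)⁻¹
      + 2 * (1 - p) * y ^ (2 * (1 - p) - 1) / (2 * ξ ^ 2 * t * (1 - p) ^ 2)) y := by
  have hinv := (hasDerivAt_const y (k ^ 2)).fun_div ((hasDerivAt_id y).const_mul 2)
    (by simpa using hy.ne')
  have hpow := ((hasDerivAt_id y).rpow_const (p := 2 * (1 - p)) (Or.inl hy.ne')).div_const
    (2 * ξ ^ 2 * t * (1 - p) ^ 2)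
  refine (hinv.add hpow).congr_deriv ?_
  simp only [id]
  field_simp
  ring

lemma sq_mul_deriv_deriv_cevPhase (t ξ p k : ℝ) (hy : 0 < y) :
    y ^ 2 * deriv (deriv (cevPhase t ξ p k)) y = k ^ 2 / y
      + 2 * (1 - p) * (2 * (1 - p) - 1) * (y ^ (2 * (1 - p)) / (2 * ξ ^ 2 * t * (1 - p) ^ 2)) := by
  have hderiv : deriv (cevPhase t ξ p k) =ᶠ[𝓝 y] fun y => -(k ^ 2 / 2) * (y ^ 2)⁻¹
      + 2 * (1 - p) * y ^ (2 * (1 - p) - 1) / (2 * ξ ^ 2 * t * (1 - p) ^ 2) := by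
    filter_upwards [Ioi_mem_nhds hy] with z hz using (hasDerivAt_cevPhase t ξ p k hz).deriv
  have hinv := (((hasDerivAt_id y).fun_pow 2).fun_inv (pow_pos hy 2).ne').const_mul (-(k ^ 2 / 2))
  have hpow := (((hasDerivAt_id y).rpow_const (p := 2 * (1 - p) - 1)
    (Or.inl hy.ne')).const_mul (2 * (1 - p))).div_const (2 * ξ ^ 2 * t * (1 - p) ^ 2)
  rw [hderiv.deriv_eq]
  refine (congrArg (y ^ 2 * ·) (hinv.fun_add hpow).deriv).trans ?_
  simp only [id, rpow_sub_one hy.ne']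
  field_simp
  ring

/- The equation says that `cevSaddle` is the critical point of `cevPhase`. -/
lemma cevSaddle_rpow_div (ht : 0 < t) (hξ : ξ ≠ 0) (hp : p < 1) (hk : k ≠ 0) :
    cevSaddle t ξ p k ^ (2 * (1 - p)) / (2 * ξ ^ 2 * t * (1 - p) ^ 2)
      = k ^ 2 / (2 * cevSaddle t ξ p k) / (2 * (1 - p)) := by
  have hq := sub_pos.2 hp
  have hY := cevSaddle_pos ht hξ hp hk
  have hcritical : cevSaddle t ξ p k ^ (2 * (1 - p)) * cevSaddle t ξ p k
      = k ^ 2 * ξ ^ 2 * t * (1 - p) / 2 := by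
    rw [← rpow_add_one hY.ne', cevSaddle, ← rpow_mul (by positivity)]
    convert rpow_one _ using 2
    field_simp [show 3 - 2 * p ≠ 0 by linarith]
    ring
  generalize cevSaddle t ξ p k ^ (2 * (1 - p)) = Yq at *
  rw [← eq_div_iff hY.ne'] at hcritical
  rw [hcritical]
  field_simp

lemma sq_mul_deriv_deriv_cevPhase_saddle (ht : 0 < t) (hξ : ξ ≠ 0) (hp : p < 1) (hk : k ≠ 0) :
    cevSaddle t ξ p k ^ 2 * deriv (deriv (cevPhase t ξ p k)) (cevSaddle t ξ p k)
      = k ^ 2 / (2 * cevSaddle t ξ p k) * (1 + 2 * (1 - p)) := by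
  have hq := sub_pos.2 hp
  have hY := cevSaddle_pos ht hξ hp hk
  rw [sq_mul_deriv_deriv_cevPhase t ξ p k hY, cevSaddle_rpow_div ht hξ hp hk]
  field_simp
  ring

lemma deriv_deriv_cevPhase_saddle_pos (ht : 0 < t) (hξ : ξ ≠ 0) (hp : p < 1) (hk : k ≠ 0) :
    0 < deriv (deriv (cevPhase t ξ p k)) (cevSaddle t ξ p k) := by
  have : 0 < 1 - p := sub_pos.2 hp
  have hY := cevSaddle_pos ht hξ hp hk
  refine pos_of_mul_pos_right ?_ (pow_pos hY 2).le
  rw [sq_mul_deriv_deriv_cevPhase_saddle ht hξ hp hk]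
  positivity

lemma cevPhase_saddle_mul_exp_sub (ht : 0 < t) (hξ : ξ ≠ 0) (hp : p < 1) (hk : k ≠ 0) (w : ℝ) :
    cevPhase t ξ p k (cevSaddle t ξ p k * exp w) - cevPhase t ξ p k (cevSaddle t ξ p k)
      = k ^ 2 / (2 * cevSaddle t ξ p k) * (exp (-w) - 1)
        + k ^ 2 / (2 * cevSaddle t ξ p k) / (2 * (1 - p)) * (exp (2 * (1 - p) * w) - 1) := by
  have hY := cevSaddle_pos ht hξ hp hk
  have hexp : exp w ^ (2 * (1 - p)) = exp (2 * (1 - p) * w) := by rw [← exp_mul, mul_comm]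
  rw [cevPhase, cevPhase, mul_rpow hY.le (exp_pos w).le, mul_div_right_comm,
    cevSaddle_rpow_div ht hξ hp hk, hexp, exp_neg]
  field_simp
  ring

lemma isLaplacePhase_cev (ht : 0 < t) (hξ : ξ ≠ 0) (hy0 : 0 < y0) (hp : p < 1) (hk : k ≠ 0) :
    IsLaplacePhase
      (fun w => cevPhase t ξ p k (cevSaddle t ξ p k * exp w) - cevPhase t ξ p k (cevSaddle t ξ p k))
      (fun w => cevSubphase t ξ y0 p (cevSaddle t ξ p k * exp w)
        - cevSubphase t ξ y0 p (cevSaddle t ξ p k))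
      (cevSaddle t ξ p k ^ 2 * deriv (deriv (cevPhase t ξ p k)) (cevSaddle t ξ p k))
      (cevSaddle t ξ p k * deriv (cevSubphase t ξ y0 p) (cevSaddle t ξ p k)) := by
  have hq := sub_pos.2 hp
  have hY := cevSaddle_pos ht hξ hp hk
  have hsub (w : ℝ) : cevSubphase t ξ y0 p (cevSaddle t ξ p k * exp w)
      - cevSubphase t ξ y0 p (cevSaddle t ξ p k)
      = cevSubphase t ξ y0 p (cevSaddle t ξ p k) * (exp ((1 - p) * w) - 1) := by
    rw [cevSubphase_mul t ξ p hy0.le hY.le (exp_pos w).le, ← exp_mul, mul_comm w]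
    ring
  simp_rw [cevPhase_saddle_mul_exp_sub ht hξ hp hk, hsub,
    sq_mul_deriv_deriv_cevPhase_saddle ht hξ hp hk, mul_deriv_cevSubphase t ξ p hy0 hY]
  exact isLaplacePhase_exp (by positivity) _ hq

end CEV

lemma integral_Ioi_zero_eq_integral_exp (F : ℝ → ℝ) {Y δ : ℝ} (hY : 0 < Y) (hδ : 0 < δ) :
    ∫ y in Ioi 0, F y = ∫ v, Y * δ * exp (δ * v) * F (Y * exp (δ * v)) := by
  have hexp : ∫ y in Ioi 0, F (Y * y) = ∫ w, exp w * F (Y * exp w) := by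
    have h := integral_image_eq_integral_abs_deriv_smul MeasurableSet.univ
      (fun x _ => (hasDerivAt_exp x).hasDerivWithinAt) exp_injective.injOn fun y => F (Y * y)
    simpa only [image_univ, range_exp, Measure.restrict_univ, smul_eq_mul, abs_exp] using h
  have hleft := integral_comp_mul_left_Ioi F 0 hY
  have hright := Measure.integral_comp_mul_left (fun w => exp w * F (Y * exp w)) δ
  rw [mul_zero, smul_eq_mul, eq_inv_mul_iff_mul_eq₀ hY.ne'] at hleft
  rw [abs_of_pos (inv_pos.2 hδ), smul_eq_mul, eq_inv_mul_iff_mul_eq₀ hδ.ne'] at hright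
  simp_rw [mul_assoc]
  rw [← hleft, hexp, ← hright, integral_const_mul, integral_const_mul]

section CEVIntegrand

/-- The absorbed CEV density `ζ_p`. -/
noncomputable def cevDensity (t ξ y0 p y : ℝ) : ℝ :=
  √y0 * y ^ ((1 : ℝ) / 2 - 2 * p) / ((1 - p) * ξ ^ 2 * t)
    * exp (-(y ^ (2 * (1 - p)) + y0 ^ (2 * (1 - p))) / (2 * ξ ^ 2 * t * (1 - p) ^ 2))
    * besselI (1 / (2 * (1 - p))) ((y0 * y) ^ (1 - p) / ((1 - p) ^ 2 * ξ ^ 2 * t))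

/-- The constant factor in the leading term of the integrand of the CEV call price. -/
noncomputable def cevPrefactor (t ξ y0 p k : ℝ) : ℝ :=
  y0 ^ (p / 2) * exp (k / 2 - y0 ^ (2 * (1 - p)) / (2 * ξ ^ 2 * t * (1 - p) ^ 2))
    / (2 * π * k ^ 2 * ξ * √t)

/-- The ratio between the integrand of the CEV call price and its leading term: the Black–Scholes
price and the Bessel function are each divided by their leading asymptotics. -/
noncomputable def cevCorrection (t ξ y0 p k y τ : ℝ) : ℝ :=
  BS k (y * τ) 1 / callLeading k (y * τ)
    * (besselI (1 / (2 * (1 - p))) (cevSubphase t ξ y0 p y) * √(2 * π * cevSubphase t ξ y0 p y)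
      * exp (-cevSubphase t ξ y0 p y))

variable {t ξ y0 p k y τ : ℝ}

lemma sqrt_cevSubphase (ht : 0 < t) (hξ : 0 < ξ) (hy0 : 0 < y0) (hp : p < 1) (hy : 0 < y) :
    √(cevSubphase t ξ y0 p y) = y ^ ((1 - p) / 2) * y0 ^ ((1 - p) / 2) / (ξ * √t * (1 - p)) := by
  have hq := sub_pos.2 hp
  have hhalf {z : ℝ} (hz : 0 < z) : √(z ^ (1 - p)) = z ^ ((1 - p) / 2) := by
    rw [sqrt_eq_rpow, ← rpow_mul hz.le]
    ring_nf
  rw [cevSubphase, mul_rpow hy.le hy0.le, sqrt_div (by positivity), sqrt_mul (by positivity),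
    hhalf hy, hhalf hy0, sqrt_mul (by positivity), sqrt_mul (by positivity), sqrt_sq hξ.le,
    sqrt_sq hq.le]

lemma sqrt_mul_rpow_div_sqrt_cevSubphase (ht : 0 < t) (hξ : 0 < ξ) (hy0 : 0 < y0) (hp : p < 1)
    (hy : 0 < y) (hτ : 0 < τ) :
    √y0 * y ^ ((1 : ℝ) / 2 - 2 * p) / ((1 - p) * ξ ^ 2 * t) * (y * τ * √(y * τ))
        / √(cevSubphase t ξ y0 p y)
      = y0 ^ (p / 2) / (ξ * √t) * τ ^ ((3 : ℝ) / 2) * y ^ (3 * (1 - p) / 2) := by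
  have hq := sub_pos.2 hp
  have hy_pow : y ^ (3 * (1 - p) / 2) * y ^ ((1 - p) / 2)
      = y ^ ((1 : ℝ) / 2 - 2 * p) * (y * √y) := by
    rw [sqrt_eq_rpow, ← rpow_one_add' hy.le (by norm_num), ← rpow_add hy, ← rpow_add hy]
    ring_nf
  have hy0_pow : √y0 = y0 ^ (p / 2) * y0 ^ ((1 - p) / 2) := by
    rw [← rpow_add hy0, sqrt_eq_rpow]
    ring_nf
  have hτ_pow : τ ^ ((3 : ℝ) / 2) = τ * √τ := by
    rw [sqrt_eq_rpow, ← rpow_one_add' hτ.le (by norm_num)]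
    norm_num
  have ht_sq : √t ^ 2 = t := sq_sqrt ht.le
  rw [sqrt_cevSubphase ht hξ hy0 hp hy, hy0_pow, hτ_pow, sqrt_mul hy.le, ← ht_sq,
    sqrt_sq (sqrt_nonneg t)]
  have hyq : 0 < y ^ ((1 - p) / 2) := rpow_pos_of_pos hy _
  generalize y ^ (3 * (1 - p) / 2) = u, y ^ ((1 - p) / 2) = v, y ^ ((1 : ℝ) / 2 - 2 * p) = z at *
  field_simp
  linear_combination -hy_pow

lemma BS_mul_cevDensity (ht : 0 < t) (hξ : 0 < ξ) (hy0 : 0 < y0) (hp : p < 1) (hk : k ≠ 0)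
    (hy : 0 < y) (hτ : 0 < τ) :
    BS k y τ * cevDensity t ξ y0 p y
      = cevPrefactor t ξ y0 p k * τ ^ ((3 : ℝ) / 2) * y ^ (3 * (1 - p) / 2)
        * cevCorrection t ξ y0 p k y τ
        * exp (-(k ^ 2 / (2 * (y * τ)) + y ^ (2 * (1 - p)) / (2 * ξ ^ 2 * t * (1 - p) ^ 2))
          + cevSubphase t ξ y0 p y) := by
  have hx := cevSubphase_pos ht hξ.ne' hy0 hp hy
  have hpow := sqrt_mul_rpow_div_sqrt_cevSubphase ht hξ hy0 hp hy hτ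
  have harg : (y0 * y) ^ (1 - p) / ((1 - p) ^ 2 * ξ ^ 2 * t) = cevSubphase t ξ y0 p y := by
    rw [cevSubphase, mul_comm y0, mul_assoc, mul_comm ((1 - p) ^ 2)]
  rw [BS_eq_BS_mul_one, cevDensity, harg, cevCorrection, callLeading]
  set x := cevSubphase t ξ y0 p y
  set D := 2 * ξ ^ 2 * t * (1 - p) ^ 2 with hD
  have hexp_density : exp (-(y ^ (2 * (1 - p)) + y0 ^ (2 * (1 - p))) / D)
      = exp (-(y ^ (2 * (1 - p)) / D)) * exp (-(y0 ^ (2 * (1 - p)) / D)) := by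
    rw [← exp_add]
    ring_nf
  have hexp_phase : exp (-(k ^ 2 / (2 * (y * τ)) + y ^ (2 * (1 - p)) / D) + x)
      = exp (-k ^ 2 / (2 * (y * τ))) * exp (-(y ^ (2 * (1 - p)) / D)) * exp x := by
    rw [← exp_add, ← exp_add]
    ring_nf
  have hpref : cevPrefactor t ξ y0 p k * τ ^ ((3 : ℝ) / 2) * y ^ (3 * (1 - p) / 2)
      = exp (k / 2) * exp (-(y0 ^ (2 * (1 - p)) / D)) / (2 * π * k ^ 2)
        * (√y0 * y ^ ((1 : ℝ) / 2 - 2 * p) / ((1 - p) * ξ ^ 2 * t) * (y * τ * √(y * τ)) / √x) := by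
    rw [hpow, cevPrefactor, ← hD, sub_eq_add_neg, exp_add]
    field_simp
  rw [hpref, hexp_density, hexp_phase, exp_neg x, sqrt_mul (by positivity) x]
  field_simp
  rw [sq_sqrt (by positivity)]
  ring

lemma exists_abs_cevCorrection_sub_one_le (ht : 0 < t) (hξ : ξ ≠ 0) (hy0 : 0 < y0) (hp : p < 1)
    (hk : 0 < k) : ∃ K ≥ 0, ∀ y τ, 0 < y → 0 < τ →
      |cevCorrection t ξ y0 p k y τ - 1| ≤ K * (y * τ + (cevSubphase t ξ y0 p y)⁻¹) := by
  have : 0 < 1 - p := sub_pos.2 hp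
  obtain ⟨K, hK⟩ := exists_abs_besselI_mul_sqrt_mul_exp_neg_sub_one_le
    (lt_trans (by norm_num) (by positivity : 0 < 1 / (2 * (1 - p))))
  refine ⟨max (3 / k ^ 2 + 1 / 8) K, le_max_of_le_left (by positivity), fun y τ hy hτ => ?_⟩
  have hs := mul_pos hy hτ
  have hx := cevSubphase_pos ht hξ hy0 hp hy
  have hcall := abs_BS_one_div_callLeading_sub_one_le hk hs
  have hbessel := hK _ hx
  have hcall_nonneg := div_nonneg (BS_one_nonneg hk hs) (callLeading_pos hk.ne' hs).le
  have hcall_le_one := (div_le_one (callLeading_pos hk.ne' hs)).2 (BS_one_le_callLeading hk hs)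
  unfold cevCorrection
  set b := BS k (y * τ) 1 / callLeading k (y * τ)
  set x := cevSubphase t ξ y0 p y
  set m := besselI (1 / (2 * (1 - p))) x * √(2 * π * x) * exp (-x)
  calc |b * m - 1| = |(b - 1) + b * (m - 1)| := by ring_nf
    _ ≤ |b - 1| + b * |m - 1| := by
        refine (abs_add_le _ _).trans_eq ?_
        rw [abs_mul, abs_of_nonneg hcall_nonneg]
    _ ≤ |b - 1| + |m - 1| := by
        gcongr
        exact mul_le_of_le_one_left (abs_nonneg _) hcall_le_one
    _ ≤ (3 / k ^ 2 + 1 / 8) * (y * τ) + K * x⁻¹ := add_le_add hcall hbessel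
    _ ≤ max (3 / k ^ 2 + 1 / 8) K * (y * τ + x⁻¹) := by
        rw [mul_add]
        gcongr
        exacts [le_max_left _ _, le_max_right _ _]

lemma measurable_cevCorrection_mul_exp (ht : 0 < t) (hξ : ξ ≠ 0) (hy0 : 0 < y0) (hp : p < 1)
    (k τ : ℝ) (hy : 0 < y) : Measurable fun w => cevCorrection t ξ y0 p k (y * exp w) τ := by
  have : 0 < 1 - p := sub_pos.2 hp
  have hPhi := continuous_Phi.measurable
  have hx : Measurable fun w => cevSubphase t ξ y0 p (y * exp w) := by
    unfold cevSubphase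
    fun_prop
  have hbessel := measurable_besselI_comp (ν := 1 / (2 * (1 - p)))
    (lt_trans (by norm_num) (by positivity : 0 < 1 / (2 * (1 - p)))) hx
    fun w => cevSubphase_pos ht hξ hy0 hp (mul_pos hy (exp_pos w))
  unfold cevCorrection BS callLeading
  fun_prop

end CEVIntegrand

section CEVCall

/-- The exponent `β_p`. -/
noncomputable def cevExponent (p : ℝ) : ℝ :=
  1 / (3 - 2 * p)

/-- The small parameter of Laplace's method for the CEV call price of maturity `τ`. -/
noncomputable def cevScale (p τ : ℝ) : ℝ :=
  τ ^ ((1 - cevExponent p) / 2)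

/-- The call price `C(k, τ)`: Black–Scholes with CEV-distributed variance. -/
noncomputable def cevCall (t ξ y0 p k τ : ℝ) : ℝ :=
  ∫ y in Ioi 0, BS k y τ * cevDensity t ξ y0 p y

/-- The constant `c₅`. -/
noncomputable def cevCallConst (t ξ y0 p k : ℝ) : ℝ :=
  y0 ^ (p / 2) * cevSaddle t ξ p k ^ (3 * (1 - p) / 2)
    * exp (k / 2 - y0 ^ (2 * (1 - p)) / (2 * ξ ^ 2 * t * (1 - p) ^ 2)
      + deriv (cevSubphase t ξ y0 p) (cevSaddle t ξ p k) ^ 2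
        / (2 * deriv (deriv (cevPhase t ξ p k)) (cevSaddle t ξ p k)))
    / (k ^ 2 * ξ * √(2 * π * deriv (deriv (cevPhase t ξ p k)) (cevSaddle t ξ p k) * t))

/-- The leading term of `cevCall` as `τ → 0`. -/
noncomputable def cevCallAsymptotic (t ξ y0 p k τ : ℝ) : ℝ :=
  exp (-cevPhase t ξ p k (cevSaddle t ξ p k) * τ ^ (cevExponent p - 1)
      + cevSubphase t ξ y0 p (cevSaddle t ξ p k) * τ ^ ((cevExponent p - 1) / 2))
    * cevCallConst t ξ y0 p k * τ ^ ((6 - 5 * p) / (6 - 4 * p))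

/-- The factor of `cevCall` that Laplace's method leaves outside the blown-up integral. -/
noncomputable def cevCallFactor (t ξ y0 p k τ : ℝ) : ℝ :=
  cevPrefactor t ξ y0 p k * τ ^ ((3 : ℝ) / 2)
    * (cevSaddle t ξ p k * τ ^ (-cevExponent p)) ^ (3 * (1 - p) / 2 + 1) * cevScale p τ
    * exp (-cevPhase t ξ p k (cevSaddle t ξ p k) / cevScale p τ ^ 2
      + cevSubphase t ξ y0 p (cevSaddle t ξ p k) / cevScale p τ)

/-- The amplitude of the blown-up integral, in the logarithmic coordinate `w` of the variance
`y = ȳ_p * τ ^ (-β_p) * exp w`; it tends to `1` as `τ` and `w` tend to `0`. -/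
noncomputable def cevAmplitude (t ξ y0 p k τ w : ℝ) : ℝ :=
  exp ((3 * (1 - p) / 2 + 1) * w)
    * cevCorrection t ξ y0 p k (cevSaddle t ξ p k * τ ^ (-cevExponent p) * exp w) τ

variable {t ξ y0 p k y τ : ℝ}

lemma cevScale_pos (p : ℝ) (hτ : 0 < τ) : 0 < cevScale p τ :=
  rpow_pos_of_pos hτ _

lemma cevScale_le_one (hp : p < 1) (hτ : 0 < τ) (hτ1 : τ ≤ 1) : cevScale p τ ≤ 1 := by
  have hβ : cevExponent p ≤ 1 := (div_le_one (by linarith)).2 (by linarith)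
  exact rpow_le_one hτ.le hτ1 (by linarith)

lemma cevScale_sq (p : ℝ) (hτ : 0 < τ) : cevScale p τ ^ 2 = τ ^ (-cevExponent p) * τ := by
  rw [cevScale, ← rpow_mul_natCast hτ.le, ← rpow_add_one hτ.ne']
  congr 1
  push_cast
  ring

lemma rpow_neg_cevExponent_rpow (hp : p < 1) (hτ : 0 < τ) :
    (τ ^ (-cevExponent p)) ^ (1 - p) = (cevScale p τ)⁻¹ := by
  have h3 : 3 - 2 * p ≠ 0 := by linarith
  rw [cevScale, ← rpow_neg hτ.le, ← rpow_mul hτ.le, cevExponent]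
  congr 1
  field_simp
  ring

/- The scale `τ ^ (-β_p)` of the variance is the one on which both terms of the exponent balance. -/
lemma phase_rescale (hp : p < 1) (hy : 0 ≤ y) (hτ : 0 < τ) :
    k ^ 2 / (2 * (y * τ ^ (-cevExponent p) * τ))
        + (y * τ ^ (-cevExponent p)) ^ (2 * (1 - p)) / (2 * ξ ^ 2 * t * (1 - p) ^ 2)
      = cevPhase t ξ p k y / cevScale p τ ^ 2 := by
  have hδ := cevScale_pos p hτ
  have hpow : (τ ^ (-cevExponent p)) ^ (2 * (1 - p)) = (cevScale p τ ^ 2)⁻¹ := by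
    rw [mul_comm, rpow_mul (by positivity), rpow_neg_cevExponent_rpow hp hτ, rpow_two, inv_pow]
  rw [mul_rpow hy (by positivity), hpow, mul_assoc y, ← cevScale_sq p hτ, cevPhase]
  field_simp

lemma cevSubphase_rescale (hy0 : 0 ≤ y0) (hp : p < 1) (hy : 0 ≤ y) (hτ : 0 < τ) :
    cevSubphase t ξ y0 p (y * τ ^ (-cevExponent p)) = cevSubphase t ξ y0 p y / cevScale p τ := by
  rw [cevSubphase_mul t ξ p hy0 hy (by positivity), rpow_neg_cevExponent_rpow hp hτ, div_eq_mul_inv]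

lemma BS_mul_cevDensity_rescale (ht : 0 < t) (hξ : 0 < ξ) (hy0 : 0 < y0) (hp : p < 1)
    (hk : k ≠ 0) (hτ : 0 < τ) (v : ℝ) :
    cevSaddle t ξ p k * τ ^ (-cevExponent p) * cevScale p τ * exp (cevScale p τ * v)
        * (BS k (cevSaddle t ξ p k * τ ^ (-cevExponent p) * exp (cevScale p τ * v)) τ
          * cevDensity t ξ y0 p
            (cevSaddle t ξ p k * τ ^ (-cevExponent p) * exp (cevScale p τ * v)))
      = cevCallFactor t ξ y0 p k τ * (cevAmplitude t ξ y0 p k τ (cevScale p τ * v)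
        * exp (laplaceExponent
          (fun w => cevPhase t ξ p k (cevSaddle t ξ p k * exp w)
            - cevPhase t ξ p k (cevSaddle t ξ p k))
          (fun w => cevSubphase t ξ y0 p (cevSaddle t ξ p k * exp w)
            - cevSubphase t ξ y0 p (cevSaddle t ξ p k)) (cevScale p τ) v)) := by
  have hY := cevSaddle_pos ht hξ.ne' hp hk
  rw [BS_mul_cevDensity ht hξ hy0 hp hk (by positivity) hτ, cevCallFactor, cevAmplitude,
    laplaceExponent]
  set Y := cevSaddle t ξ p k
  set w := cevScale p τ * v
  set σ := τ ^ (-cevExponent p) with hσ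
  have hYσ : 0 < Y * σ := by positivity
  rw [mul_right_comm Y σ (exp w), hσ, phase_rescale hp (by positivity) hτ,
    cevSubphase_rescale hy0.le hp (by positivity) hτ, ← hσ, mul_right_comm Y (exp w) σ]
  have hexp : exp (-(cevPhase t ξ p k (Y * exp w) / cevScale p τ ^ 2)
        + cevSubphase t ξ y0 p (Y * exp w) / cevScale p τ)
      = exp (-cevPhase t ξ p k Y / cevScale p τ ^ 2 + cevSubphase t ξ y0 p Y / cevScale p τ)
        * exp (-(cevPhase t ξ p k (Y * exp w) - cevPhase t ξ p k Y) / cevScale p τ ^ 2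
          + (cevSubphase t ξ y0 p (Y * exp w) - cevSubphase t ξ y0 p Y) / cevScale p τ) := by
    rw [← exp_add]
    ring_nf
  have hpow : Y * σ * exp w * (Y * σ * exp w) ^ (3 * (1 - p) / 2)
      = (Y * σ) ^ (3 * (1 - p) / 2 + 1) * exp ((3 * (1 - p) / 2 + 1) * w) := by
    rw [mul_comm _ w, exp_mul w, ← mul_rpow hYσ.le (exp_pos w).le, rpow_add_one (by positivity),
      mul_comm]
  rw [hexp]
  linear_combination (cevPrefactor t ξ y0 p k * τ ^ ((3 : ℝ) / 2) * cevScale p τ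
    * cevCorrection t ξ y0 p k (Y * σ * exp w) τ
    * (exp (-cevPhase t ξ p k Y / cevScale p τ ^ 2 + cevSubphase t ξ y0 p Y / cevScale p τ)
      * exp (-(cevPhase t ξ p k (Y * exp w) - cevPhase t ξ p k Y) / cevScale p τ ^ 2
        + (cevSubphase t ξ y0 p (Y * exp w) - cevSubphase t ξ y0 p Y) / cevScale p τ))) * hpow

lemma cevCall_eq (ht : 0 < t) (hξ : 0 < ξ) (hy0 : 0 < y0) (hp : p < 1) (hk : k ≠ 0)
    (hτ : 0 < τ) :
    cevCall t ξ y0 p k τ = cevCallFactor t ξ y0 p k τ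
      * ∫ v, cevAmplitude t ξ y0 p k τ (cevScale p τ * v) * exp (laplaceExponent
        (fun w => cevPhase t ξ p k (cevSaddle t ξ p k * exp w)
          - cevPhase t ξ p k (cevSaddle t ξ p k))
        (fun w => cevSubphase t ξ y0 p (cevSaddle t ξ p k * exp w)
          - cevSubphase t ξ y0 p (cevSaddle t ξ p k)) (cevScale p τ) v) := by
  have hY := cevSaddle_pos ht hξ.ne' hp hk
  rw [cevCall, integral_Ioi_zero_eq_integral_exp _ (mul_pos hY (rpow_pos_of_pos hτ _))
    (cevScale_pos p hτ), ← integral_const_mul]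
  exact integral_congr_ae (ae_of_all _ (BS_mul_cevDensity_rescale ht hξ hy0 hp hk hτ))

lemma rpow_mul_rpow_mul_cevScale (hp : p < 1) (hτ : 0 < τ) :
    τ ^ ((3 : ℝ) / 2) * (τ ^ (-cevExponent p)) ^ (3 * (1 - p) / 2 + 1) * cevScale p τ
      = τ ^ ((6 - 5 * p) / (6 - 4 * p)) := by
  have h3 : 3 - 2 * p ≠ 0 := by linarith
  rw [cevScale, ← rpow_mul hτ.le, ← rpow_add hτ, ← rpow_add hτ, cevExponent,
    show 6 - 4 * p = 2 * (3 - 2 * p) by ring]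
  congr 1
  field_simp
  ring

lemma cevCallAsymptotic_eq (ht : 0 < t) (hξ : 0 < ξ) (hp : p < 1) (hk : k ≠ 0)
    (hτ : 0 < τ) :
    cevCallAsymptotic t ξ y0 p k τ = cevCallFactor t ξ y0 p k τ
      * ∫ v, exp (-(cevSaddle t ξ p k ^ 2
            * deriv (deriv (cevPhase t ξ p k)) (cevSaddle t ξ p k) / 2) * v ^ 2
          + cevSaddle t ξ p k * deriv (cevSubphase t ξ y0 p) (cevSaddle t ξ p k) * v) := by
  have hY := cevSaddle_pos ht hξ.ne' hp hk
  have hH := deriv_deriv_cevPhase_saddle_pos ht hξ.ne' hp hk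
  have hδ_neg_two : τ ^ (cevExponent p - 1) = (cevScale p τ ^ 2)⁻¹ := by
    rw [cevScale_sq p hτ, ← rpow_add_one hτ.ne', ← rpow_neg hτ.le]
    ring_nf
  have hδ_neg_one : τ ^ ((cevExponent p - 1) / 2) = (cevScale p τ)⁻¹ := by
    rw [cevScale, ← rpow_neg hτ.le]
    ring_nf
  rw [integral_exp_neg_mul_sq_add_mul (by positivity), cevCallAsymptotic, cevCallConst,
    cevCallFactor, cevPrefactor, hδ_neg_two, hδ_neg_one, ← rpow_mul_rpow_mul_cevScale hp hτ,
    mul_rpow hY.le (by positivity), rpow_add_one hY.ne', exp_add (k / 2 - _)]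
  set Y := cevSaddle t ξ p k
  set f₀'' := deriv (deriv (cevPhase t ξ p k)) Y
  set f₁' := deriv (cevSubphase t ξ y0 p) Y
  have hshift : (Y * f₁') ^ 2 / (2 * (Y ^ 2 * f₀'')) = f₁' ^ 2 / (2 * f₀'') := by field_simp
  have hwidth : √(2 * π / (Y ^ 2 * f₀'')) = 2 * π * √t / Y / √(2 * π * f₀'' * t) := by
    rw [← sqrt_sq (by positivity : 0 ≤ 2 * π * √t / Y), ← sqrt_div (sq_nonneg _), div_pow, mul_pow,
      sq_sqrt ht.le]
    congr 1
    field_simp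
  rw [hshift, hwidth, ← div_eq_mul_inv, ← div_eq_mul_inv]
  field_simp

lemma cevCallFactor_pos (ht : 0 < t) (hξ : 0 < ξ) (hy0 : 0 < y0) (hp : p < 1) (hk : k ≠ 0)
    (hτ : 0 < τ) : 0 < cevCallFactor t ξ y0 p k τ := by
  have hY := cevSaddle_pos ht hξ.ne' hp hk
  have hδ := cevScale_pos p hτ
  unfold cevCallFactor cevPrefactor
  positivity

lemma exists_abs_cevCorrection_rescale_sub_one_le (ht : 0 < t) (hξ : ξ ≠ 0) (hy0 : 0 < y0)
    (hp : p < 1) (hk : 0 < k) : ∃ K ≥ 0, ∀ τ ∈ Ioc (0 : ℝ) 1, ∀ w,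
      |cevCorrection t ξ y0 p k (cevSaddle t ξ p k * τ ^ (-cevExponent p) * exp w) τ - 1|
        ≤ K * cevScale p τ * exp ((2 - p) * |w|) := by
  obtain ⟨K, hK, hcorrection⟩ := exists_abs_cevCorrection_sub_one_le ht hξ hy0 hp hk
  have : 0 < 1 - p := sub_pos.2 hp
  have hY := cevSaddle_pos ht hξ hp hk.ne'
  have hx := cevSubphase_pos ht hξ hy0 hp hY
  set Y := cevSaddle t ξ p k
  set x := cevSubphase t ξ y0 p Y
  refine ⟨K * (Y + x⁻¹), by positivity, fun τ ⟨hτ, hτ1⟩ w => ?_⟩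
  have hδ := cevScale_pos p hτ
  have hvariance : Y * τ ^ (-cevExponent p) * exp w * τ
      ≤ Y * (cevScale p τ * exp ((2 - p) * |w|)) := by
    have hw : w ≤ (2 - p) * |w| := by nlinarith [le_abs_self w, abs_nonneg w]
    calc Y * τ ^ (-cevExponent p) * exp w * τ = Y * (cevScale p τ ^ 2 * exp w) := by
          rw [cevScale_sq p hτ]
          ring
      _ ≤ Y * (cevScale p τ * exp ((2 - p) * |w|)) := by
          gcongr
          exact pow_le_of_le_one hδ.le (cevScale_le_one hp hτ hτ1) two_ne_zero
  have hbessel : (cevSubphase t ξ y0 p (Y * τ ^ (-cevExponent p) * exp w))⁻¹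
      ≤ x⁻¹ * (cevScale p τ * exp ((2 - p) * |w|)) := by
    have hw : -(w * (1 - p)) ≤ (2 - p) * |w| := by nlinarith [neg_abs_le w, abs_nonneg w]
    rw [cevSubphase_mul t ξ p hy0.le (by positivity) (exp_pos w).le,
      cevSubphase_rescale hy0.le hp hY.le hτ, ← exp_mul, mul_inv, inv_div, ← exp_neg,
      div_eq_inv_mul, mul_assoc]
    gcongr
  calc _ ≤ K * (Y * τ ^ (-cevExponent p) * exp w * τ
        + (cevSubphase t ξ y0 p (Y * τ ^ (-cevExponent p) * exp w))⁻¹) :=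
        hcorrection _ _ (by positivity) hτ
    _ ≤ K * (Y * (cevScale p τ * exp ((2 - p) * |w|))
        + x⁻¹ * (cevScale p τ * exp ((2 - p) * |w|))) := by gcongr
    _ = K * (Y + x⁻¹) * cevScale p τ * exp ((2 - p) * |w|) := by ring

lemma abs_exp_mul_sub_one_le {a : ℝ} (ha : 0 ≤ a) (w : ℝ) :
    |exp (a * w) - 1| ≤ a * |w| * exp (a * |w|) := by
  simpa only [exp_zero, sub_zero, abs_mul, abs_of_nonneg ha] using
    abs_exp_sub_exp_le_abs_sub_mul_exp (mul_le_mul_of_nonneg_left (le_abs_self w) ha)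
      (mul_nonneg ha (abs_nonneg w))

lemma exists_abs_cevAmplitude_sub_one_le (ht : 0 < t) (hξ : ξ ≠ 0) (hy0 : 0 < y0) (hp : p < 1)
    (hk : 0 < k) : ∃ K ≥ 0, ∃ c ≥ 0, ∀ τ ∈ Ioc (0 : ℝ) 1, ∀ w,
      |cevAmplitude t ξ y0 p k τ w - 1| ≤ K * (cevScale p τ + |w|) * exp (c * |w|) := by
  obtain ⟨K, hK, hcorrection⟩ := exists_abs_cevCorrection_rescale_sub_one_le ht hξ hy0 hp hk
  have : 0 < 1 - p := sub_pos.2 hp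
  set a := 3 * (1 - p) / 2 + 1 with ha_def
  have ha : 0 ≤ a := by positivity
  refine ⟨max K a, le_max_of_le_left hK, a + (2 - p), by linarith, fun τ hτ w => ?_⟩
  have hδ := cevScale_pos p hτ.1
  rw [cevAmplitude, ← ha_def]
  set ρ := cevCorrection t ξ y0 p k (cevSaddle t ξ p k * τ ^ (-cevExponent p) * exp w) τ
  have hw : a * w ≤ a * |w| := mul_le_mul_of_nonneg_left (le_abs_self w) ha
  have hexponent : a * |w| ≤ (a + (2 - p)) * |w| := by gcongr; linarith
  calc |exp (a * w) * ρ - 1| = |exp (a * w) * (ρ - 1) + (exp (a * w) - 1)| := by ring_nf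
    _ ≤ exp (a * w) * |ρ - 1| + |exp (a * w) - 1| := by
        refine (abs_add_le _ _).trans_eq ?_
        rw [abs_mul, abs_exp]
    _ ≤ exp (a * |w|) * (K * cevScale p τ * exp ((2 - p) * |w|))
        + a * |w| * exp (a * |w|) := by
        gcongr
        exacts [hcorrection τ hτ w, abs_exp_mul_sub_one_le ha w]
    _ = (K * cevScale p τ) * exp ((a + (2 - p)) * |w|) + a * |w| * exp (a * |w|) := by
        rw [add_mul a, exp_add]
        ring
    _ ≤ max K a * cevScale p τ * exp ((a + (2 - p)) * |w|)
        + max K a * |w| * exp ((a + (2 - p)) * |w|) := by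
        gcongr
        exacts [le_max_left _ _, le_max_right _ _]
    _ = max K a * (cevScale p τ + |w|) * exp ((a + (2 - p)) * |w|) := by ring

lemma measurable_cevAmplitude (ht : 0 < t) (hξ : ξ ≠ 0) (hy0 : 0 < y0) (hp : p < 1) (hk : k ≠ 0)
    (hτ : 0 < τ) : Measurable (cevAmplitude t ξ y0 p k τ) := by
  have hcorrection := measurable_cevCorrection_mul_exp ht hξ hy0 hp k τ
    (mul_pos (cevSaddle_pos ht hξ hp hk) (rpow_pos_of_pos hτ (-cevExponent p)))
  unfold cevAmplitude
  fun_prop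

theorem exists_abs_cevCall_div_cevCallAsymptotic_sub_one_le (ht : 0 < t) (hξ : 0 < ξ)
    (hy0 : 0 < y0) (hp : p < 1) (hk : 0 < k) : ∃ K, ∀ τ ∈ Ioc (0 : ℝ) 1,
      |cevCall t ξ y0 p k τ / cevCallAsymptotic t ξ y0 p k τ - 1| ≤ K * cevScale p τ := by
  have hY := cevSaddle_pos ht hξ.ne' hp hk.ne'
  have hH := deriv_deriv_cevPhase_saddle_pos ht hξ.ne' hp hk.ne'
  obtain ⟨K₀, hK₀, c, hc, hamplitude⟩ := exists_abs_cevAmplitude_sub_one_le ht hξ.ne' hy0 hp hk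
  obtain ⟨K, hK⟩ := (isLaplacePhase_cev ht hξ.ne' hy0 hp hk.ne')
    |>.exists_abs_integral_mul_exp_laplaceExponent_sub_le hK₀ hc
  set Z := ∫ v, exp (-(cevSaddle t ξ p k ^ 2
      * deriv (deriv (cevPhase t ξ p k)) (cevSaddle t ξ p k) / 2) * v ^ 2
    + cevSaddle t ξ p k * deriv (cevSubphase t ξ y0 p) (cevSaddle t ξ p k) * v) with hZ
  have hZ_pos : 0 < Z := by
    rw [hZ, integral_exp_neg_mul_sq_add_mul (by positivity)]
    positivity
  refine ⟨K / Z, fun τ hτ => ?_⟩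
  have hlaplace := hK _ (cevScale_pos p hτ.1) (cevScale_le_one hp hτ.1 hτ.2) _
    (measurable_cevAmplitude ht hξ.ne' hy0 hp hk.ne' hτ.1) (hamplitude τ hτ)
  rw [cevCall_eq ht hξ hy0 hp hk.ne' hτ.1, cevCallAsymptotic_eq ht hξ hp hk.ne' hτ.1, ← hZ,
    mul_div_mul_left _ _ (cevCallFactor_pos ht hξ hy0 hp hk.ne' hτ.1).ne',
    div_sub_one hZ_pos.ne', abs_div, abs_of_pos hZ_pos, div_mul_eq_mul_div]
  gcongr

end CEVCall

theorem stmt_9 (t ξ y0 p : ℝ) (ht : 0 < t) (hξ : 0 < ξ) (hy0 : 0 < y0) (hp : p < 1)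
    (k : ℝ) (hk : 0 < k) :
    let βp : ℝ := 1 / (3 - 2 * p)
    let ybar : ℝ := (k ^ 2 * ξ ^ 2 * t * (1 - p) / 2) ^ βp
    let f0 : ℝ → ℝ := fun y => k ^ 2 / (2 * y) + y ^ (2 * (1 - p)) / (2 * ξ ^ 2 * t * (1 - p) ^ 2)
    let f1 : ℝ → ℝ := fun y => (y * y0) ^ (1 - p) / (ξ ^ 2 * t * (1 - p) ^ 2)
    let c5 : ℝ := y0 ^ (p / 2) * ybar ^ (3 * (1 - p) / 2)
        * Real.exp (k / 2 - y0 ^ (2 * (1 - p)) / (2 * ξ ^ 2 * t * (1 - p) ^ 2)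
            + (deriv f1 ybar) ^ 2 / (2 * deriv (deriv f0) ybar))
        / (k ^ 2 * ξ * Real.sqrt (2 * Real.pi * deriv (deriv f0) ybar * t))
    -- the absorbed CEV density (case `p < 1`)
    let ζ : ℝ → ℝ := fun z =>
      Real.sqrt y0 * z ^ ((1 : ℝ) / 2 - 2 * p) / ((1 - p) * ξ ^ 2 * t)
        * Real.exp (-(z ^ (2 * (1 - p)) + y0 ^ (2 * (1 - p))) / (2 * ξ ^ 2 * t * (1 - p) ^ 2))
        * besselI (1 / (2 * (1 - p))) ((y0 * z) ^ (1 - p) / ((1 - p) ^ 2 * ξ ^ 2 * t))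
    -- the call price
    let C : ℝ → ℝ := fun τ => ∫ y in Set.Ioi (0 : ℝ), BS k y τ * ζ y
    ∃ C₀ > (0 : ℝ), ∃ τ₀ > (0 : ℝ), ∀ τ ∈ Set.Ioo (0 : ℝ) τ₀,
      |C τ / (Real.exp (-(f0 ybar) * τ ^ (βp - 1) + f1 ybar * τ ^ ((βp - 1) / 2))
          * c5 * τ ^ ((6 - 5 * p) / (6 - 4 * p))) - 1|
        ≤ C₀ * τ ^ ((1 - βp) / 2) := by
  obtain ⟨K, hK⟩ := exists_abs_cevCall_div_cevCallAsymptotic_sub_one_le ht hξ hy0 hp hk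
  intro βp ybar f0 f1 c5 ζ C
  refine ⟨max K 1, lt_max_of_lt_right one_pos, 1, one_pos, fun τ hτ => ?_⟩
  calc _ ≤ K * cevScale p τ := hK τ ⟨hτ.1, hτ.2.le⟩
    _ ≤ max K 1 * cevScale p τ :=
        mul_le_mul_of_nonneg_right (le_max_left K 1) (cevScale_pos p hτ.1).le
end

section
/- Fix t > 0, ξ > 0, y₀ > 0 and k ≠ 0, and let C(k,τ) be the call price in the lognormal-variance model. Suppose σ : (0, τ₀) → (0,∞) satisfies BS(k, σ(τ)², τ) = C(k,τ) for all τ ∈ (0,τ₀) (the implied volatility). Then lim_{τ→0⁺} σ(τ)²·τ·(log τ)² / (k²·ξ²·t) = 1; that is, σ(τ)² ∼ k²ξ²t/(τ·(log τ)²) as τ → 0⁺. -/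
/-!
By put–call parity it suffices to treat `k > 0`. As a function of the total volatility `s = √(wT)`,
the Black–Scholes price `G(s)` increases and satisfies `s² log G(s) → -k²/2` as `s → 0⁺`.
The model price is the average of `G(√(eᵁτ))` over a Gaussian `U` of variance `v = ξ²t`. For small
`τ` it is dominated by the event `eᵁ ≈ 1/τ`, whose probability is roughly `exp (-(log τ)²/(2v))`;
a Chernoff bound with exponent `-(log τ)/v` shows that nothing else contributes more. Hence
`log C ∼ -(log τ)²/(2v)`, and comparing the two logarithms gives `s² (log τ)² → k² v`.
-/

open MeasureTheory ProbabilityTheory Filter Topology Set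
open scoped NNReal

/-! ### The standard normal distribution function -/

lemma Phi_eq_setIntegral (x : ℝ) : Phi x = ∫ s in Iic x, gaussianPDFReal 0 1 s := by
  simp [Phi, gaussianPDFReal, div_eq_inv_mul]

lemma Phi_eq_real_Iic (x : ℝ) : Phi x = (gaussianReal 0 1).real (Iic x) := by
  rw [Phi_eq_setIntegral, Measure.real, gaussianReal_apply_eq_integral _ one_ne_zero,
    ENNReal.toReal_ofReal (integral_nonneg fun s => gaussianPDFReal_nonneg _ _ _)]

lemma Phi_nonneg (x : ℝ) : 0 ≤ Phi x := by
  rw [Phi_eq_real_Iic]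
  exact measureReal_nonneg

lemma Phi_le_one (x : ℝ) : Phi x ≤ 1 := by
  rw [Phi_eq_real_Iic]
  exact measureReal_le_one

lemma Phi_neg (x : ℝ) : Phi (-x) = 1 - Phi x := by
  have : NullSingletonClass (gaussianReal 0 1) := nullSingletonClass_gaussianReal one_ne_zero
  have h_reflect : Phi (-x) = (gaussianReal 0 1).real (Ici x) := by
    have h_map : (gaussianReal 0 1).map (fun y => -y) = gaussianReal 0 1 := by
      simpa using gaussianReal_map_neg (μ := 0) (v := 1)
    rw [Phi_eq_real_Iic, ← h_map, map_measureReal_apply measurable_neg measurableSet_Iic, h_map]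
    simp
  rw [h_reflect, measureReal_congr Ioi_ae_eq_Ici.symm, ← compl_Iic,
    probReal_compl_eq_one_sub measurableSet_Iic, ← Phi_eq_real_Iic]

lemma Phi_le_exp_of_nonpos {x : ℝ} (hx : x ≤ 0) : Phi x ≤ Real.exp (-x ^ 2 / 2) := by
  have h_chernoff := measure_le_le_exp_mul_mgf (μ := gaussianReal 0 1) (X := id) (t := x) x hx
    (integrable_exp_mul_gaussianReal x)
  rw [mgf_id_gaussianReal, ← Real.exp_add] at h_chernoff
  rw [Phi_eq_real_Iic]
  refine h_chernoff.trans_eq (congrArg Real.exp ?_)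
  push_cast
  ring

lemma Phi_add_eq_setIntegral (x s : ℝ) :
    Phi (x + s) = ∫ y in Iic x, gaussianPDFReal 0 1 (y + s) := by
  rw [Phi_eq_setIntegral, ← (measurePreserving_add_right volume s).setIntegral_preimage_emb
    (measurableEmbedding_addRight s)]
  simp

lemma continuous_gaussianPDFReal (μ : ℝ) (v : ℝ≥0) : Continuous (gaussianPDFReal μ v) := by
  unfold gaussianPDFReal
  fun_prop

lemma hasDerivAt_Phi_s12 (x : ℝ) : HasDerivAt Phi (gaussianPDFReal 0 1 x) x := by
  have h_int := integrable_gaussianPDFReal 0 1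
  have h_primitive : Phi = fun y => Phi 0 + ∫ s in (0 : ℝ)..y, gaussianPDFReal 0 1 s := by
    funext y
    rw [← intervalIntegral.integral_Iic_sub_Iic h_int.integrableOn h_int.integrableOn,
      ← Phi_eq_setIntegral, ← Phi_eq_setIntegral]
    ring
  have h_cont := continuous_gaussianPDFReal 0 1
  rw [h_primitive]
  exact (intervalIntegral.integral_hasDerivAt_right h_int.intervalIntegrable
    (h_cont.stronglyMeasurableAtFilter _ _) h_cont.continuousAt).const_add _

/-! ### The Black–Scholes price as a function of total volatility -/

/-- The Black–Scholes call price with log-moneyness `k` as a function of the total volatility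
`s = √(w T)`, the only way in which `w` and `T` enter `BS k w T`. -/
noncomputable def normalizedCall (k s : ℝ) : ℝ :=
  Phi (-k / s + s / 2) - Real.exp k * Phi (-k / s - s / 2)

lemma BS_eq_normalizedCall (k w T : ℝ) : BS k w T = normalizedCall k (√(w * T)) := rfl

lemma BS_put_call_parity (k w T : ℝ) :
    BS k w T - (1 - Real.exp k) = Real.exp k * BS (-k) w T := by
  rw [BS, BS, show ∀ s : ℝ, -k / s + s / 2 = -(-(-k) / s - s / 2) by intro s; ring,
    show ∀ s : ℝ, -k / s - s / 2 = -(-(-k) / s + s / 2) by intro s; ring, Phi_neg, Phi_neg]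
  have h_exp : Real.exp k * Real.exp (-k) = 1 := by rw [← Real.exp_add]; simp
  linear_combination Phi (-(-k) / √(w * T) - √(w * T) / 2) * h_exp

lemma gaussianPDFReal_zero_one (x : ℝ) :
    gaussianPDFReal 0 1 x = (√(2 * Real.pi))⁻¹ * Real.exp (-(x ^ 2 / 2)) := by
  simp [gaussianPDFReal, neg_div]

lemma exp_mul_gaussianPDFReal (k x : ℝ) :
    Real.exp k * gaussianPDFReal 0 1 x = (√(2 * Real.pi))⁻¹ * Real.exp (k - x ^ 2 / 2) := by
  rw [gaussianPDFReal_zero_one, mul_left_comm, ← Real.exp_add, sub_eq_add_neg]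

lemma exp_mul_gaussianPDFReal_sub_half (k : ℝ) {s : ℝ} (hs : s ≠ 0) :
    Real.exp k * gaussianPDFReal 0 1 (-k / s - s / 2) = gaussianPDFReal 0 1 (-k / s + s / 2) := by
  rw [exp_mul_gaussianPDFReal, gaussianPDFReal_zero_one]
  congr 2
  field

lemma hasDerivAt_normalizedCall (k : ℝ) {s : ℝ} (hs : s ≠ 0) :
    HasDerivAt (normalizedCall k) (gaussianPDFReal 0 1 (-k / s + s / 2)) s := by
  have h_div : HasDerivAt (fun s : ℝ => -k / s) (k / s ^ 2) s := by
    simpa [div_eq_mul_inv] using (hasDerivAt_inv hs).const_mul (-k)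
  have h_half : HasDerivAt (fun s : ℝ => s / 2) (1 / 2) s := (hasDerivAt_id s).div_const 2
  have h_plus := (hasDerivAt_Phi_s12 (-k / s + s / 2)).comp s (h_div.add h_half)
  have h_minus := (hasDerivAt_Phi_s12 (-k / s - s / 2)).comp s (h_div.sub h_half)
  refine (h_plus.sub (h_minus.const_mul (Real.exp k))).congr_deriv ?_
  rw [← mul_assoc, exp_mul_gaussianPDFReal_sub_half k hs]
  ring

lemma strictMonoOn_normalizedCall (k : ℝ) : StrictMonoOn (normalizedCall k) (Ioi 0) := by
  refine strictMonoOn_of_hasDerivWithinAt_pos (convex_Ioi 0)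
    (f' := fun s => gaussianPDFReal 0 1 (-k / s + s / 2))
    (fun s hs => (hasDerivAt_normalizedCall k (ne_of_gt hs)).continuousAt.continuousWithinAt)
    (fun s hs => ?_) (fun s _ => gaussianPDFReal_pos _ _ _ one_ne_zero)
  rw [interior_Ioi] at hs
  exact (hasDerivAt_normalizedCall k (ne_of_gt hs)).hasDerivWithinAt

lemma normalizedCall_nonneg (k : ℝ) {s : ℝ} (hs : 0 < s) : 0 ≤ normalizedCall k s := by
  have h_pdf : ∀ x ∈ Iic (-k / s - s / 2),
      Real.exp k * gaussianPDFReal 0 1 x ≤ gaussianPDFReal 0 1 (x + s) := by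
    intro x hx
    rw [exp_mul_gaussianPDFReal, gaussianPDFReal_zero_one]
    refine mul_le_mul_of_nonneg_left (Real.exp_le_exp.2 ?_) (by positivity)
    have h_mul : x * s ≤ (-k / s - s / 2) * s := mul_le_mul_of_nonneg_right hx hs.le
    rw [sub_mul, div_mul_cancel₀ _ hs.ne'] at h_mul
    linarith
  have h_int := integrable_gaussianPDFReal 0 1
  rw [normalizedCall, show -k / s + s / 2 = -k / s - s / 2 + s by ring, sub_nonneg,
    Phi_add_eq_setIntegral, Phi_eq_setIntegral, ← integral_const_mul]
  exact setIntegral_mono_on (h_int.const_mul _).integrableOn (h_int.comp_add_right s).integrableOn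
    measurableSet_Iic h_pdf

lemma normalizedCall_pos (k : ℝ) {s : ℝ} (hs : 0 < s) : 0 < normalizedCall k s :=
  (normalizedCall_nonneg k (half_pos hs)).trans_lt
    (strictMonoOn_normalizedCall k (half_pos hs) hs (half_lt_self hs))

lemma normalizedCall_le_Phi (k s : ℝ) : normalizedCall k s ≤ Phi (-k / s + s / 2) :=
  sub_le_self _ (mul_nonneg (Real.exp_pos k).le (Phi_nonneg _))

lemma normalizedCall_le_exp {k s : ℝ} (hk : 0 ≤ k) (hs : 0 < s) :
    normalizedCall k s ≤ Real.exp (k / 2 - k ^ 2 / (2 * s ^ 2)) := by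
  refine (normalizedCall_le_Phi k s).trans ?_
  rcases le_total (-k / s + s / 2) 0 with h_neg | h_pos
  · refine (Phi_le_exp_of_nonpos h_neg).trans (Real.exp_le_exp.2 ?_)
    have h_sq : -(-k / s + s / 2) ^ 2 / 2 = k / 2 - k ^ 2 / (2 * s ^ 2) - s ^ 2 / 8 := by
      field
    linarith [sq_nonneg s]
  · refine (Phi_le_one _).trans (Real.one_le_exp ?_)
    have h_factor : k / 2 - k ^ 2 / (2 * s ^ 2) = k / (2 * s) * (-k / s + s / 2 + s / 2) := by
      field
    rw [h_factor]
    positivity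

lemma le_normalizedCall (k : ℝ) {a s : ℝ} (ha : 0 < a) (has : a < s) :
    (√(2 * Real.pi))⁻¹ * Real.exp (k / 2 - k ^ 2 / (2 * a ^ 2) - s ^ 2 / 8) * (s - a)
      ≤ normalizedCall k s := by
  obtain ⟨c, ⟨hac, hcs⟩, h_slope⟩ := exists_hasDerivAt_eq_slope (normalizedCall k)
    (fun s => gaussianPDFReal 0 1 (-k / s + s / 2)) has
    (fun x hx =>
      (hasDerivAt_normalizedCall k (ha.trans_le hx.1).ne').continuousAt.continuousWithinAt)
    (fun x hx => hasDerivAt_normalizedCall k (ha.trans hx.1).ne')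
  have hc : 0 < c := ha.trans hac
  have h_pdf : gaussianPDFReal 0 1 (-k / c + c / 2)
      = (√(2 * Real.pi))⁻¹ * Real.exp (k / 2 - k ^ 2 / (2 * c ^ 2) - c ^ 2 / 8) := by
    rw [gaussianPDFReal_zero_one]
    congr 2
    field
  calc (√(2 * Real.pi))⁻¹ * Real.exp (k / 2 - k ^ 2 / (2 * a ^ 2) - s ^ 2 / 8) * (s - a)
      ≤ gaussianPDFReal 0 1 (-k / c + c / 2) * (s - a) := by
        rw [h_pdf]
        gcongr
    _ = normalizedCall k s - normalizedCall k a := by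
        rw [h_slope, div_mul_cancel₀ _ (sub_pos.2 has).ne']
    _ ≤ normalizedCall k s := sub_le_self _ (normalizedCall_nonneg k ha)

/-! ### Small total volatility -/

lemma le_sq_mul_log_normalizedCall (k : ℝ) {s : ℝ} (hs : 0 < s) (hs1 : s < 1) :
    s ^ 2 * Real.log (s ^ 2) + s ^ 2 * (k / 2 - Real.log (√(2 * Real.pi)))
        - k ^ 2 / (2 * (1 - s) ^ 2) - s ^ 4 / 8
      ≤ s ^ 2 * Real.log (normalizedCall k s) := by
  have h1s : 0 < 1 - s := sub_pos.2 hs1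
  -- With `a = s (1 - s)` the factor `s - a = s²` is only a power of `s`, while `a ∼ s`.
  have h_bound := le_normalizedCall k (mul_pos hs h1s) (mul_lt_of_lt_one_right hs (by linarith))
  rw [show s - s * (1 - s) = s ^ 2 by ring] at h_bound
  have h_log := Real.log_le_log (by positivity) h_bound
  rw [Real.log_mul (by positivity) (by positivity), Real.log_mul (by positivity) (by positivity),
    Real.log_inv, Real.log_exp] at h_log
  refine (le_of_eq ?_).trans (mul_le_mul_of_nonneg_left h_log (sq_nonneg s))
  field

lemma sq_mul_log_normalizedCall_le {k s : ℝ} (hk : 0 ≤ k) (hs : 0 < s) :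
    s ^ 2 * Real.log (normalizedCall k s) ≤ s ^ 2 * (k / 2) - k ^ 2 / 2 := by
  have h_log := Real.log_le_log (normalizedCall_pos k hs) (normalizedCall_le_exp hk hs)
  rw [Real.log_exp] at h_log
  refine (mul_le_mul_of_nonneg_left h_log (sq_nonneg s)).trans_eq ?_
  field

lemma tendsto_sq_mul_log_normalizedCall {k : ℝ} (hk : 0 ≤ k) :
    Tendsto (fun s => s ^ 2 * Real.log (normalizedCall k s)) (𝓝[>] 0) (𝓝 (-(k ^ 2 / 2))) := by
  have h_lower : ContinuousAt (fun s : ℝ => s ^ 2 * Real.log (s ^ 2)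
      + s ^ 2 * (k / 2 - Real.log (√(2 * Real.pi))) - k ^ 2 / (2 * (1 - s) ^ 2) - s ^ 4 / 8) 0 := by
    have h_div : ContinuousAt (fun s : ℝ => k ^ 2 / (2 * (1 - s) ^ 2)) 0 :=
      ContinuousAt.div (by fun_prop) (by fun_prop) (by norm_num)
    fun_prop
  have h_upper : Continuous fun s : ℝ => s ^ 2 * (k / 2) - k ^ 2 / 2 := by fun_prop
  refine tendsto_of_tendsto_of_tendsto_of_le_of_le'
    (by convert h_lower.tendsto.mono_left nhdsWithin_le_nhds using 2; ring)
    (by convert (h_upper.tendsto 0).mono_left nhdsWithin_le_nhds using 2; ring) ?_ ?_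
  · filter_upwards [Ioo_mem_nhdsGT one_pos] with s hs
    exact le_sq_mul_log_normalizedCall k hs.1 hs.2
  · filter_upwards [self_mem_nhdsWithin] with s hs
    exact sq_mul_log_normalizedCall_le hk hs

lemma tendsto_nhdsGT_zero_of_normalizedCall {α : Type*} {l : Filter α} {k : ℝ} {s : α → ℝ}
    (hs : ∀ᶠ x in l, 0 < s x) (h : Tendsto (fun x => normalizedCall k (s x)) l (𝓝 0)) :
    Tendsto s l (𝓝[>] 0) := by
  refine tendsto_nhdsWithin_iff.2 ⟨tendsto_order.2 ⟨fun a ha => ?_, fun δ hδ => ?_⟩, hs⟩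
  · exact hs.mono fun x hx => ha.trans hx
  · filter_upwards [hs, h.eventually_lt_const (normalizedCall_pos k hδ)] with x hx h_lt
    exact ((strictMonoOn_normalizedCall k).lt_iff_lt hx hδ).1 h_lt

/-! ### Random variance -/

/-- The price of a call with log-moneyness `k` and maturity `τ` when the variance is random and
its logarithm has law `ν`: the average of Black–Scholes prices over `ν`. -/
noncomputable def mixedCall (ν : Measure ℝ) (k τ : ℝ) : ℝ := ∫ u, BS k (Real.exp u) τ ∂ν

lemma integral_BS_exp_put_call_parity (ν : Measure ℝ) (k τ : ℝ) :
    ∫ u, (BS k (Real.exp u) τ - (1 - Real.exp k)) ∂ν = Real.exp k * mixedCall ν (-k) τ := by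
  simp only [BS_put_call_parity, mixedCall, integral_const_mul]

lemma BS_abs_eq_mixedCall_abs {ν : Measure ℝ} {k w τ : ℝ}
    (h : BS k w τ = if k < 0 then
        1 - Real.exp k + ∫ u, (BS k (Real.exp u) τ - (1 - Real.exp k)) ∂ν
      else mixedCall ν k τ) :
    BS |k| w τ = mixedCall ν |k| τ := by
  split_ifs at h with hk
  · rw [integral_BS_exp_put_call_parity, ← sub_eq_iff_eq_add', BS_put_call_parity] at h
    rw [abs_of_neg hk]
    exact mul_left_cancel₀ (Real.exp_pos k).ne' h
  · rwa [abs_of_nonneg (not_lt.1 hk)]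

lemma BS_exp_nonneg (k u : ℝ) {τ : ℝ} (hτ : 0 < τ) : 0 ≤ BS k (Real.exp u) τ :=
  normalizedCall_nonneg k (by positivity)

lemma monotone_BS_exp (k : ℝ) {τ : ℝ} (hτ : 0 < τ) : Monotone fun u => BS k (Real.exp u) τ := by
  intro u u' h
  exact (strictMonoOn_normalizedCall k).monotoneOn (mem_Ioi.2 (by positivity))
    (mem_Ioi.2 (by positivity)) (by gcongr)

lemma integrable_BS_exp (ν : Measure ℝ) [IsFiniteMeasure ν] (k : ℝ) {τ : ℝ} (hτ : 0 < τ) :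
    Integrable (fun u => BS k (Real.exp u) τ) ν := by
  refine Integrable.of_bound (monotone_BS_exp k hτ).measurable.aestronglyMeasurable 1
    (Eventually.of_forall fun u => ?_)
  rw [Real.norm_of_nonneg (BS_exp_nonneg k u hτ)]
  exact (normalizedCall_le_Phi k _).trans (Phi_le_one _)

lemma BS_exp_mul_measureReal_Ici_le_mixedCall (ν : Measure ℝ) [IsFiniteMeasure ν] (k a : ℝ) {τ : ℝ}
    (hτ : 0 < τ) : BS k (Real.exp a) τ * ν.real (Ici a) ≤ mixedCall ν k τ := by
  have h_markov := mul_meas_ge_le_integral_of_nonneg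
    (Eventually.of_forall fun u => BS_exp_nonneg k u hτ) (integrable_BS_exp ν k hτ)
    (BS k (Real.exp a) τ)
  exact (mul_le_mul_of_nonneg_left (measureReal_mono fun u hu => monotone_BS_exp k hτ hu)
    (BS_exp_nonneg k a hτ)).trans h_markov

lemma exp_neg_le_div_rpow {a p : ℝ} (ha : 0 < a) (hp : 0 < p) :
    Real.exp (-a) ≤ (p / a) ^ p := by
  have h_inv : Real.exp (-(a / p)) ≤ p / a := by
    rw [Real.exp_neg, ← inv_div a p]
    exact inv_anti₀ (by positivity) ((lt_add_one _).le.trans (Real.add_one_le_exp _))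
  calc Real.exp (-a) = Real.exp (-(a / p)) ^ p := by
        rw [← Real.exp_mul, neg_mul, div_mul_cancel₀ a hp.ne']
    _ ≤ (p / a) ^ p := Real.rpow_le_rpow (Real.exp_pos _).le h_inv hp.le

lemma mixedCall_le_mgf (ν : Measure ℝ) {k p τ : ℝ} (hk : 0 < k) (hp : 0 < p) (hτ : 0 < τ)
    (h_int : Integrable (fun u => Real.exp (p * u)) ν) :
    mixedCall ν k τ ≤ Real.exp (k / 2) * (2 * p * τ / k ^ 2) ^ p * mgf id ν p := by
  have h_bound (u : ℝ) : BS k (Real.exp u) τ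
      ≤ Real.exp (k / 2) * (2 * p * τ / k ^ 2) ^ p * Real.exp (p * u) := by
    have h_var : 0 < Real.exp u * τ := by positivity
    calc BS k (Real.exp u) τ
        ≤ Real.exp (k / 2 - k ^ 2 / (2 * √(Real.exp u * τ) ^ 2)) :=
          normalizedCall_le_exp hk.le (Real.sqrt_pos.2 h_var)
      _ = Real.exp (k / 2) * Real.exp (-(k ^ 2 / (2 * (Real.exp u * τ)))) := by
          rw [Real.sq_sqrt h_var.le, sub_eq_add_neg, Real.exp_add]
      _ ≤ Real.exp (k / 2) * (p / (k ^ 2 / (2 * (Real.exp u * τ)))) ^ p := by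
          gcongr
          exact exp_neg_le_div_rpow (by positivity) hp
      _ = Real.exp (k / 2) * (2 * p * τ / k ^ 2 * Real.exp u) ^ p := by
          congr 2
          field
      _ = Real.exp (k / 2) * (2 * p * τ / k ^ 2) ^ p * Real.exp (p * u) := by
          rw [Real.mul_rpow (by positivity) (Real.exp_pos u).le, ← Real.exp_mul, mul_comm u p,
            ← mul_assoc]
  rw [mgf, ← integral_const_mul]
  exact integral_mono_of_nonneg (Eventually.of_forall fun u => BS_exp_nonneg k u hτ)
    (h_int.const_mul _) (Eventually.of_forall h_bound)

/-! ### Lognormal variance -/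

lemma integral_lognormal_eq_integral_gaussianReal {t ξ : ℝ} (ht : 0 < t) (hξ : 0 < ξ) (μ : ℝ)
    (g : ℝ → ℝ) :
    ∫ y in Ioi (0 : ℝ), g y * ((y * ξ * √(2 * Real.pi * t))⁻¹
        * Real.exp (-(Real.log y - μ) ^ 2 / (2 * ξ ^ 2 * t)))
      = ∫ u, g (Real.exp u) ∂(gaussianReal μ (ξ ^ 2 * t).toNNReal) := by
  have hv : 0 < ξ ^ 2 * t := by positivity
  have h_subst := integral_image_eq_integral_abs_deriv_smul MeasurableSet.univ
    (fun x _ => (Real.hasDerivAt_exp x).hasDerivWithinAt) Real.exp_injective.injOn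
    (fun y => g y * ((y * ξ * √(2 * Real.pi * t))⁻¹
        * Real.exp (-(Real.log y - μ) ^ 2 / (2 * ξ ^ 2 * t))))
  rw [image_univ, Real.range_exp, Measure.restrict_univ] at h_subst
  rw [h_subst, integral_gaussianReal_eq_integral_smul (Real.toNNReal_pos.2 hv).ne']
  congr 1 with u
  have h_sqrt : √(2 * Real.pi * (ξ ^ 2 * t)) = ξ * √(2 * Real.pi * t) := by
    rw [show 2 * Real.pi * (ξ ^ 2 * t) = ξ ^ 2 * (2 * Real.pi * t) by ring,
      Real.sqrt_mul (by positivity), Real.sqrt_sq hξ.le]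
  rw [gaussianPDFReal, Real.coe_toNNReal _ hv.le, h_sqrt, Real.log_exp,
    abs_of_pos (Real.exp_pos u), smul_eq_mul, smul_eq_mul, ← mul_assoc 2]
  field

lemma antitoneOn_gaussianPDFReal (μ : ℝ) (v : ℝ≥0) :
    AntitoneOn (gaussianPDFReal μ v) (Ici μ) := by
  intro x hx y _ hxy
  unfold gaussianPDFReal
  have : 0 ≤ x - μ := sub_nonneg.2 hx
  gcongr

lemma gaussianPDFReal_add_one_le_measureReal_Ici {μ a : ℝ} (v : ℝ≥0) (ha : μ ≤ a) :
    gaussianPDFReal μ v (a + 1) ≤ (gaussianReal μ v).real (Ici a) := by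
  rcases eq_or_ne v 0 with rfl | hv
  · simp
  refine le_trans ?_ (measureReal_mono (Icc_subset_Ici_self : Icc a (a + 1) ⊆ Ici a))
  rw [Measure.real, gaussianReal_apply_eq_integral _ hv,
    ENNReal.toReal_ofReal (integral_nonneg fun s => gaussianPDFReal_nonneg _ _ _)]
  have h_const := setIntegral_ge_of_const_le_real (μ := volume) measurableSet_Icc (by simp)
    (fun x (hx : x ∈ Icc a (a + 1)) => antitoneOn_gaussianPDFReal μ v
      (ha.trans hx.1) (ha.trans (hx.1.trans hx.2)) hx.2)
    (integrable_gaussianPDFReal μ v).integrableOn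
  simpa using h_const

section LognormalVariance

variable {μ τ : ℝ} {v : ℝ≥0}

lemma normalizedCall_one_mul_gaussianPDFReal_le_mixedCall (k : ℝ) (hτ : 0 < τ)
    (hμ : μ ≤ -Real.log τ) :
    normalizedCall k 1 * gaussianPDFReal μ v (-Real.log τ + 1)
      ≤ mixedCall (gaussianReal μ v) k τ := by
  have h_one : BS k (Real.exp (-Real.log τ)) τ = normalizedCall k 1 := by
    rw [BS_eq_normalizedCall, Real.exp_neg, Real.exp_log hτ, inv_mul_cancel₀ hτ.ne', Real.sqrt_one]
  rw [← h_one]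
  exact (mul_le_mul_of_nonneg_left (gaussianPDFReal_add_one_le_measureReal_Ici v hμ)
    (BS_exp_nonneg k _ hτ)).trans
    (BS_exp_mul_measureReal_Ici_le_mixedCall (gaussianReal μ v) k _ hτ)

lemma mixedCall_gaussianReal_pos (k : ℝ) (hv : v ≠ 0) (hτ : 0 < τ) (hμ : μ ≤ -Real.log τ) :
    0 < mixedCall (gaussianReal μ v) k τ :=
  (mul_pos (normalizedCall_pos k one_pos) (gaussianPDFReal_pos μ v _ hv)).trans_le
    (normalizedCall_one_mul_gaussianPDFReal_le_mixedCall k hτ hμ)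

lemma le_log_mixedCall_gaussianReal (k : ℝ) (hv : v ≠ 0) (hτ : 0 < τ) (hμ : μ ≤ -Real.log τ) :
    Real.log (normalizedCall k 1) - Real.log (√(2 * Real.pi * v))
        - (-Real.log τ + 1 - μ) ^ 2 / (2 * v)
      ≤ Real.log (mixedCall (gaussianReal μ v) k τ) := by
  have h_call := normalizedCall_pos k one_pos
  have h_log := Real.log_le_log (mul_pos h_call (gaussianPDFReal_pos μ v _ hv))
    (normalizedCall_one_mul_gaussianPDFReal_le_mixedCall k hτ hμ)
  rw [gaussianPDFReal, Real.log_mul h_call.ne' (by positivity),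
    Real.log_mul (by positivity) (by positivity), Real.log_inv, Real.log_exp] at h_log
  refine (le_of_eq ?_).trans h_log
  ring

lemma log_mixedCall_gaussianReal_le {k : ℝ} (hk : 0 < k) (hv : v ≠ 0) (hτ : 0 < τ)
    (hτ1 : τ < 1) (hμ : μ ≤ -Real.log τ) :
    Real.log (mixedCall (gaussianReal μ v) k τ)
      ≤ k / 2 + -Real.log τ / v * (Real.log (2 / (v * k ^ 2)) + Real.log (-Real.log τ) + μ)
        - (-Real.log τ) ^ 2 / (2 * v) := by
  set L := -Real.log τ with hL
  have hL_pos : 0 < L := neg_pos.2 (Real.log_neg hτ hτ1)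
  have hv_pos : 0 < (v : ℝ) := NNReal.coe_pos.2 (pos_iff_ne_zero.2 hv)
  -- `p = L / v` minimises the Gaussian part `-p L + v p² / 2` of the exponent.
  have h_log := Real.log_le_log (mixedCall_gaussianReal_pos k hv hτ hμ)
    (mixedCall_le_mgf (gaussianReal μ v) hk (div_pos hL_pos hv_pos) hτ
      (integrable_exp_mul_gaussianReal _))
  have h_base : Real.log (2 * (L / v) * τ / k ^ 2)
      = Real.log (2 / (v * k ^ 2)) + Real.log L - L := by
    rw [show 2 * (L / v) * τ / k ^ 2 = 2 / (v * k ^ 2) * L * τ by field,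
      Real.log_mul (by positivity) hτ.ne', Real.log_mul (by positivity) hL_pos.ne', hL,
      sub_neg_eq_add]
  rw [mgf_id_gaussianReal, Real.log_mul (by positivity) (by positivity),
    Real.log_mul (by positivity) (by positivity), Real.log_exp, Real.log_exp,
    Real.log_rpow (by positivity), h_base] at h_log
  refine h_log.trans_eq ?_
  field

end LognormalVariance

lemma tendsto_neg_log_nhdsGT_zero : Tendsto (fun τ : ℝ => -Real.log τ) (𝓝[>] 0) atTop :=
  tendsto_neg_atBot_atTop.comp Real.tendsto_log_nhdsGT_zero

lemma tendsto_sub_sq_div_div_sq (a b c : ℝ) :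
    Tendsto (fun L : ℝ => (a - (L + b) ^ 2 / c) / L ^ 2) atTop (𝓝 (-c⁻¹)) := by
  have h_inv : Tendsto (fun L : ℝ => L⁻¹) atTop (𝓝 0) := tendsto_inv_atTop_zero
  have h_lim := ((h_inv.pow 2).const_mul a).sub
    ((((h_inv.const_mul b).const_add 1).pow 2).mul_const c⁻¹)
  rw [show a * 0 ^ 2 - (1 + b * 0) ^ 2 * c⁻¹ = -c⁻¹ by ring] at h_lim
  refine h_lim.congr' ?_
  filter_upwards [eventually_ne_atTop 0] with L hL
  field

lemma tendsto_add_mul_log_sub_sq_div_div_sq (a b c d : ℝ) :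
    Tendsto (fun L : ℝ => (a + L / d * (b + Real.log L + c) - L ^ 2 / (2 * d)) / L ^ 2) atTop
      (𝓝 (-(2 * d)⁻¹)) := by
  have h_inv : Tendsto (fun L : ℝ => L⁻¹) atTop (𝓝 0) := tendsto_inv_atTop_zero
  have h_log : Tendsto (fun L : ℝ => Real.log L / L) atTop (𝓝 0) :=
    Real.isLittleO_log_id_atTop.tendsto_div_nhds_zero
  have h_lim := (((h_inv.pow 2).const_mul a).add
    (((h_inv.const_mul (b + c)).add h_log).const_mul d⁻¹)).sub_const (2 * d)⁻¹
  rw [show a * 0 ^ 2 + d⁻¹ * ((b + c) * 0 + 0) - (2 * d)⁻¹ = -(2 * d)⁻¹ by ring] at h_lim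
  refine h_lim.congr' ?_
  filter_upwards [eventually_ne_atTop 0] with L hL
  field

lemma tendsto_log_mixedCall_div_log_sq {k : ℝ} (hk : 0 < k) (μ : ℝ) {v : ℝ≥0} (hv : v ≠ 0) :
    Tendsto (fun τ => Real.log (mixedCall (gaussianReal μ v) k τ) / Real.log τ ^ 2) (𝓝[>] 0)
      (𝓝 (-(2 * v : ℝ)⁻¹)) := by
  refine tendsto_of_tendsto_of_tendsto_of_le_of_le'
    ((tendsto_sub_sq_div_div_sq (Real.log (normalizedCall k 1) - Real.log (√(2 * Real.pi * v)))
      (1 - μ) (2 * v)).comp tendsto_neg_log_nhdsGT_zero)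
    ((tendsto_add_mul_log_sub_sq_div_div_sq (k / 2) (Real.log (2 / (v * k ^ 2))) μ v).comp
      tendsto_neg_log_nhdsGT_zero) ?_ ?_
  · filter_upwards [self_mem_nhdsWithin, tendsto_neg_log_nhdsGT_zero.eventually_ge_atTop μ]
      with τ hτ hμ
    simp only [Function.comp_apply, neg_sq (Real.log τ), ← add_sub_assoc]
    gcongr
    exact le_log_mixedCall_gaussianReal k hv hτ hμ
  · filter_upwards [Ioo_mem_nhdsGT one_pos, tendsto_neg_log_nhdsGT_zero.eventually_ge_atTop μ]
      with τ hτ hμ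
    rw [Function.comp_apply, ← neg_sq (Real.log τ)]
    gcongr
    exact log_mixedCall_gaussianReal_le hk hv hτ.1 hτ.2 hμ

lemma tendsto_mixedCall_nhdsGT_zero {k : ℝ} (hk : 0 < k) (μ : ℝ) {v : ℝ≥0} (hv : v ≠ 0) :
    Tendsto (fun τ => mixedCall (gaussianReal μ v) k τ) (𝓝[>] 0) (𝓝 0) := by
  have h_log_sq : Tendsto (fun τ => Real.log τ ^ 2) (𝓝[>] 0) atTop := by
    simpa [Function.comp_def] using
      (tendsto_pow_atTop two_ne_zero).comp tendsto_neg_log_nhdsGT_zero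
  have h_atBot := (tendsto_log_mixedCall_div_log_sq hk μ hv).neg_mul_atTop
    (neg_neg_of_pos (by positivity)) h_log_sq
  refine (Real.tendsto_exp_atBot.comp h_atBot).congr' ?_
  filter_upwards [Ioo_mem_nhdsGT one_pos, tendsto_neg_log_nhdsGT_zero.eventually_ge_atTop μ]
    with τ hτ hμ
  rw [Function.comp_apply, div_mul_cancel₀ _ (pow_ne_zero 2 (Real.log_neg hτ.1 hτ.2).ne),
    Real.exp_log (mixedCall_gaussianReal_pos k hv hτ.1 hμ)]

lemma tendsto_sq_mul_log_sq_of_normalizedCall_eq {k : ℝ} (hk : 0 < k) (μ : ℝ) {v : ℝ≥0}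
    (hv : v ≠ 0) {s : ℝ → ℝ} (hs : ∀ᶠ τ in 𝓝[>] 0, 0 < s τ)
    (h_eq : ∀ᶠ τ in 𝓝[>] 0, normalizedCall k (s τ) = mixedCall (gaussianReal μ v) k τ) :
    Tendsto (fun τ => s τ ^ 2 * Real.log τ ^ 2) (𝓝[>] 0) (𝓝 (k ^ 2 * v)) := by
  have h_model := tendsto_log_mixedCall_div_log_sq hk μ hv
  have h_neg : -(2 * v : ℝ)⁻¹ < 0 := neg_neg_of_pos (by positivity)
  have h_small : Tendsto s (𝓝[>] 0) (𝓝[>] 0) :=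
    tendsto_nhdsGT_zero_of_normalizedCall hs
      ((tendsto_mixedCall_nhdsGT_zero hk μ hv).congr' (h_eq.mono fun _ h => h.symm))
  have h_quot := ((tendsto_sq_mul_log_normalizedCall hk.le).comp h_small).div h_model h_neg.ne
  rw [show -(k ^ 2 / 2) / -(2 * v : ℝ)⁻¹ = k ^ 2 * v by field] at h_quot
  refine h_quot.congr' ?_
  filter_upwards [h_eq, h_model.eventually_lt_const h_neg] with τ h_eq h_ne
  rw [Pi.div_apply, Function.comp_apply, h_eq, div_div_eq_mul_div, mul_right_comm,
    mul_div_cancel_right₀ _ (fun h => by simp [h] at h_ne)]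

theorem stmt_12 (t ξ y0 : ℝ) (ht : 0 < t) (hξ : 0 < ξ) (hy0 : 0 < y0)
    (k : ℝ) (hk : k ≠ 0) :
    let μ0 : ℝ := Real.log y0 - ξ ^ 2 * t / 2
    -- the lognormal density (case `p = 1`)
    let ζ1 : ℝ → ℝ := fun y =>
      (y * ξ * Real.sqrt (2 * Real.pi * t))⁻¹
        * Real.exp (-(Real.log y - μ0) ^ 2 / (2 * ξ ^ 2 * t))
    -- the call price (via put–call parity for negative log-moneyness)
    let C : ℝ → ℝ := fun τ =>
      if k < 0 then
        1 - Real.exp k + ∫ y in Set.Ioi (0 : ℝ), (BS k y τ - (1 - Real.exp k)) * ζ1 y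
      else ∫ y in Set.Ioi (0 : ℝ), BS k y τ * ζ1 y
    ∀ τ₀ > (0 : ℝ), ∀ σ : ℝ → ℝ,
      (∀ τ ∈ Set.Ioo (0 : ℝ) τ₀, 0 < σ τ ∧ BS k (σ τ ^ 2) τ = C τ) →
      Filter.Tendsto (fun τ => σ τ ^ 2 * τ * (Real.log τ) ^ 2 / (k ^ 2 * ξ ^ 2 * t))
        (nhdsWithin 0 (Set.Ioi 0)) (nhds 1) := by
  intro μ0 ζ1 C τ₀ hτ₀ σ hσ
  have hv : 0 < ξ ^ 2 * t := by positivity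
  have h_subst (g : ℝ → ℝ) : ∫ y in Ioi (0 : ℝ), g y * ζ1 y
      = ∫ u, g (Real.exp u) ∂(gaussianReal μ0 (ξ ^ 2 * t).toNNReal) :=
    integral_lognormal_eq_integral_gaussianReal ht hξ μ0 g
  have h_mem : ∀ᶠ τ in 𝓝[>] (0 : ℝ), τ ∈ Ioo 0 τ₀ := Ioo_mem_nhdsGT hτ₀
  have h_call : ∀ τ ∈ Ioo 0 τ₀, BS |k| (σ τ ^ 2) τ
      = mixedCall (gaussianReal μ0 (ξ ^ 2 * t).toNNReal) |k| τ := by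
    refine fun τ hτ => BS_abs_eq_mixedCall_abs ((hσ τ hτ).2.trans ?_)
    simp only [C]
    rw [h_subst fun y => BS k y τ - (1 - Real.exp k), h_subst fun y => BS k y τ, mixedCall]
  have h_lim := tendsto_sq_mul_log_sq_of_normalizedCall_eq (abs_pos.2 hk) μ0
    (Real.toNNReal_pos.2 hv).ne' (s := fun τ => √(σ τ ^ 2 * τ))
    (h_mem.mono fun τ hτ => Real.sqrt_pos.2 (mul_pos (pow_pos (hσ τ hτ).1 2) hτ.1))
    (h_mem.mono h_call)
  rw [Real.coe_toNNReal _ hv.le, sq_abs, ← mul_assoc] at h_lim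
  rw [← div_self (by positivity : k ^ 2 * ξ ^ 2 * t ≠ 0)]
  refine (h_lim.div_const _).congr' (h_mem.mono fun τ hτ => ?_)
  rw [Real.sq_sqrt (mul_nonneg (sq_nonneg _) hτ.1.le)]
end
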